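/- arXiv:2006.07366 — 3 statements merged into one kernel-verified Lean document; each statement's English description precedes it below -/
import Mathlib

section
/- There exist universal constants C, c > 0 such that for every finite type α, every probability mass function p on α, every integer n ≥ 2, and every ε > 0, the collision estimator satisfies P[|Q̃ − Q| > ε] ≤ C · exp(−c · min(ε²/v², ε/b, n·√ε)), where v² = (∑_x p(x)²)/n² + (∑_x p(x)³)/n and b = (max_x p(x))/n. -/
open MeasureTheory ProbabilityTheory Finset

/-- The collision estimator: fraction of colliding ordered pairs in the sample. -/
noncomputable def collEst {α : Type} [DecidableEq α] (n : ℕ) (ω : Fin n → α) : ℝ :=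
  ((Finset.univ.filter fun ij : Fin n × Fin n => ij.1 ≠ ij.2 ∧ ω ij.1 = ω ij.2).card : ℝ) /
    ((n : ℝ) * ((n : ℝ) - 1))

namespace CollTail

section
variable {α : Type} [Fintype α]

/-- Expectation under the product law. -/
noncomputable def E (p : α → ℝ) (n : ℕ) (F : (Fin n → α) → ℝ) : ℝ :=
  ∑ ω : Fin n → α, (∏ i, p (ω i)) * F ω

theorem E_zero (p : α → ℝ) (F : (Fin 0 → α) → ℝ) : E p 0 F = F Fin.elim0 := by
  simp only [E, Finset.univ_unique, Finset.sum_singleton, Finset.univ_eq_empty, Finset.prod_empty,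
    one_mul]
  congr 1

theorem E_succ (p : α → ℝ) (n : ℕ) (F : (Fin (n+1) → α) → ℝ) :
    E p (n+1) F = ∑ y, p y * E p n (fun ω => F (Fin.cons y ω)) := by
  unfold E
  rw [← (Fin.consEquiv (fun _ : Fin (n+1) => α)).sum_comp, Fintype.sum_prod_type]
  refine Finset.sum_congr rfl fun y _ => ?_
  rw [Finset.mul_sum]
  refine Finset.sum_congr rfl fun ω _ => ?_
  simp [Fin.consEquiv, Fin.prod_univ_succ, mul_assoc]

theorem E_mono {p : α → ℝ} (hp : ∀ x, 0 ≤ p x) {n : ℕ} {F G : (Fin n → α) → ℝ}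
    (h : ∀ ω, F ω ≤ G ω) : E p n F ≤ E p n G :=
  Finset.sum_le_sum fun ω _ => mul_le_mul_of_nonneg_left (h ω) (Finset.prod_nonneg fun i _ => hp _)

theorem E_add (p : α → ℝ) {n : ℕ} (F G : (Fin n → α) → ℝ) :
    E p n (fun ω => F ω + G ω) = E p n F + E p n G := by
  simp [E, mul_add, Finset.sum_add_distrib]

theorem E_smul (p : α → ℝ) {n : ℕ} (c : ℝ) (F : (Fin n → α) → ℝ) :
    E p n (fun ω => c * F ω) = c * E p n F := by
  simp only [E, Finset.mul_sum]
  exact Finset.sum_congr rfl fun _ _ => by ring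

theorem E_sum (p : α → ℝ) {n : ℕ} {ι : Type} (s : Finset ι) (F : ι → (Fin n → α) → ℝ) :
    E p n (fun ω => ∑ i ∈ s, F i ω) = ∑ i ∈ s, E p n (F i) := by
  simp only [E, Finset.mul_sum]
  exact Finset.sum_comm

theorem E_one {p : α → ℝ} (hp1 : ∑ x, p x = 1) (n : ℕ) : E p n (fun _ => 1) = 1 := by
  induction n with
  | zero => rw [E_zero]
  | succ n ih => rw [E_succ]; simp [ih, hp1]

variable [DecidableEq α]

/-- Occupancy count. -/
def cnt {n : ℕ} (ω : Fin n → α) (x : α) : ℕ := ∑ i, if ω i = x then 1 else 0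

/-- Number of ordered colliding pairs. -/
def S {n : ℕ} (ω : Fin n → α) : ℕ :=
  (Finset.univ.filter fun ij : Fin n × Fin n => ij.1 ≠ ij.2 ∧ ω ij.1 = ω ij.2).card

theorem cnt_cons {n : ℕ} (y : α) (ω : Fin n → α) (x : α) :
    cnt (Fin.cons y ω : Fin (n+1) → α) x = cnt ω x + if y = x then 1 else 0 := by
  unfold cnt
  rw [Fin.sum_univ_succ, add_comm]
  simp only [Fin.cons_zero, Fin.cons_succ]

theorem cnt_zero (ω : Fin 0 → α) (x : α) : cnt ω x = 0 := by simp [cnt]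

theorem S_cons {n : ℕ} (y : α) (ω : Fin n → α) :
    S (Fin.cons y ω : Fin (n+1) → α) = S ω + 2 * cnt ω y := by
  unfold S cnt
  rw [Finset.card_filter, Finset.card_filter, Fintype.sum_prod_type, Fintype.sum_prod_type]
  simp only [Fin.sum_univ_succ, Fin.cons_zero, Fin.cons_succ, ne_eq, not_true_eq_false, false_and,
    if_false, Fin.succ_ne_zero, not_false_eq_true, true_and, Fin.succ_inj, Finset.sum_add_distrib,
    (Fin.succ_ne_zero _).symm]
  have : ∑ i : Fin n, (if y = ω i then 1 else 0) = ∑ i : Fin n, (if ω i = y then 1 else 0) := by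
    simp only [eq_comm]
  omega

theorem S_zero (ω : Fin 0 → α) : S ω = 0 := by simp [S]

/-- Compensator. -/
noncomputable def comp (p : α → ℝ) (φ : ℕ → ℝ) : ∀ n : ℕ, (Fin n → α) → ℝ
  | 0, _ => 0
  | n+1, ω => comp p φ n (Fin.tail ω) + ∑ x, p x * φ (cnt (Fin.tail ω) x)

theorem comp_cons (p : α → ℝ) (φ : ℕ → ℝ) {n : ℕ} (y : α) (ω : Fin n → α) :
    comp p φ (n+1) (Fin.cons y ω) = comp p φ n ω + ∑ x, p x * φ (cnt ω x) := by
  simp [comp]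

/-- Exponential supermartingale. -/
theorem E_super {p : α → ℝ} (hp : ∀ x, 0 ≤ p x) (hp1 : ∑ x, p x = 1) (σ : ℝ) (n : ℕ) :
    E p n (fun ω => Real.exp (σ * (S ω : ℝ) / 2 -
      comp p (fun k => Real.exp (σ * (k:ℝ)) - 1) n ω)) ≤ 1 := by
  induction n with
  | zero => rw [E_zero]; simp [S_zero, comp]
  | succ n ih =>
    refine le_trans ?_ ih
    rw [E_succ]
    simp only [← E_smul]
    rw [← E_sum]
    apply E_mono hp
    intro ω
    simp only [S_cons, comp_cons]
    set a := σ * (S ω : ℝ) / 2 - comp p (fun k => Real.exp (σ * (k:ℝ)) - 1) n ω with ha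
    set z := ∑ x, p x * Real.exp (σ * (cnt ω x : ℝ)) with hz
    have h1 : ∑ x, p x * (Real.exp (σ * (cnt ω x : ℝ)) - 1) = z - 1 := by
      simp [mul_sub, Finset.sum_sub_distrib, hp1, hz]
    rw [h1]
    have h2 : ∀ y, p y * Real.exp (σ * ((S ω + 2 * cnt ω y : ℕ) : ℝ) / 2 -
        (comp p (fun k => Real.exp (σ * (k:ℝ)) - 1) n ω + (z - 1))) =
        (Real.exp a * Real.exp (-(z-1))) * (p y * Real.exp (σ * (cnt ω y : ℝ))) := by
      intro y
      rw [show σ * ((S ω + 2 * cnt ω y : ℕ) : ℝ) / 2 -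
        (comp p (fun k => Real.exp (σ * (k:ℝ)) - 1) n ω + (z - 1)) = a + (-(z-1)) + 
          σ * (cnt ω y : ℝ) by rw [ha]; push_cast; ring, Real.exp_add, Real.exp_add]
      ring
    simp only [h2]
    rw [← Finset.mul_sum, ← hz]
    have h3 : z ≤ Real.exp (z - 1) := by have := Real.add_one_le_exp (z-1); linarith
    calc Real.exp a * Real.exp (-(z-1)) * z ≤ Real.exp a * Real.exp (-(z-1)) * Real.exp (z-1) := by
          gcongr
      _ = Real.exp a := by rw [mul_assoc, ← Real.exp_add]; simp

theorem comp_le {p : α → ℝ} (hp : ∀ x, 0 ≤ p x) (φ r : ℕ → ℝ) (σ : ℝ) (hr : Monotone r) {n : ℕ}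
    (ω : Fin n → α) (h : ∀ x, ∀ k ≤ cnt ω x, φ k ≤ σ * k + r k) :
    comp p φ n ω ≤ σ * comp p (fun k => (k:ℝ)) n ω + ∑ x, (n * p x) * r (cnt ω x) := by
  induction n with
  | zero => simp [comp]
  | succ n ih =>
    rw [← Fin.cons_self_tail ω] at h ⊢
    generalize Fin.tail ω = ω' at h ⊢
    generalize ω 0 = y at h ⊢
    have hc : ∀ x, cnt ω' x ≤ cnt (Fin.cons y ω' : Fin (n+1) → α) x := fun x => by
      rw [cnt_cons]; omega
    rw [comp_cons, comp_cons]
    have h1 := ih ω' (fun x k hk => h x k (hk.trans (hc x)))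
    have h2 : ∑ x, p x * φ (cnt ω' x) ≤ ∑ x, p x * (σ * (cnt ω' x : ℝ) + 
        r (cnt (Fin.cons y ω' : Fin (n+1) → α) x)) := by
      refine Finset.sum_le_sum fun x _ => mul_le_mul_of_nonneg_left ?_ (hp x)
      exact (h x _ (hc x)).trans (by gcongr; exact hr (hc x))
    have h3 : ∑ x, (n * p x) * r (cnt ω' x) ≤ 
        ∑ x, (n * p x) * r (cnt (Fin.cons y ω' : Fin (n+1) → α) x) :=
      Finset.sum_le_sum fun x _ => mul_le_mul_of_nonneg_left (hr (hc x)) 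
        (mul_nonneg (Nat.cast_nonneg n) (hp x))
    simp only [mul_add, Finset.sum_add_distrib] at h2
    have h4 : ∑ x, (((n+1 : ℕ) : ℝ) * p x) * r (cnt (Fin.cons y ω' : Fin (n+1) → α) x) = 
        ∑ x, (n * p x) * r (cnt (Fin.cons y ω' : Fin (n+1) → α) x) + 
        ∑ x, p x * r (cnt (Fin.cons y ω' : Fin (n+1) → α) x) := by
      rw [← Finset.sum_add_distrib]
      refine Finset.sum_congr rfl fun x _ => ?_
      push_cast; ring
    have h5 : ∑ x, p x * (σ * (cnt ω' x : ℝ)) = σ * ∑ x, p x * (cnt ω' x : ℝ) := by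
      rw [Finset.mul_sum]; exact Finset.sum_congr rfl fun x _ => by ring
    rw [h4]
    linarith

/-- Linear part. -/
theorem E_lin {p : α → ℝ} (hp : ∀ x, 0 ≤ p x) (hp1 : ∑ x, p x = 1) (κ : ℝ) (N : ℕ)
    (hκ : ∀ x, |κ| * (N * p x) ≤ 1) (n : ℕ) : ∀ (j : ℕ), j + n ≤ N →
    E p n (fun ω => Real.exp (κ * (comp p (fun k => (k:ℝ)) n ω + j * ∑ x, p x * (cnt ω x : ℝ)))) ≤
      Real.exp (κ * (n * j + n * (n-1) / 2) * ∑ x, p x ^ 2 + κ^2 * n * N^2 * ∑ x, p x ^ 3) := by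
  induction n with
  | zero => intro j _; rw [E_zero]; simp [comp, cnt_zero]
  | succ n ih =>
    intro j hj
    rw [E_succ]
    have h1 : ∀ y (ω : Fin n → α), Real.exp (κ * (comp p (fun k => (k:ℝ)) (n+1) (Fin.cons y ω) +
        j * ∑ x, p x * (cnt (Fin.cons y ω : Fin (n+1) → α) x : ℝ))) = 
        Real.exp (κ * j * p y) * Real.exp (κ * (comp p (fun k => (k:ℝ)) n ω + 
          ((j+1 : ℕ) : ℝ) * ∑ x, p x * (cnt ω x : ℝ))) := by
      intro y ω
      rw [← Real.exp_add, comp_cons]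
      simp only [cnt_cons]
      push_cast
      simp only [mul_add, Finset.sum_add_distrib]
      simp
      ring
    simp only [h1, E_smul, ← mul_assoc]
    rw [← Finset.sum_mul]
    have h2 : ∑ y, p y * Real.exp (κ * j * p y) ≤ 
        Real.exp (κ * j * ∑ x, p x ^ 2 + κ^2 * N^2 * ∑ x, p x ^ 3) := by
      have hjN : (j:ℝ) ≤ N := by exact_mod_cast (by omega : j ≤ N)
      have h3 : ∀ y, p y * Real.exp (κ * j * p y) ≤ 
          p y + κ * j * p y ^ 2 + κ^2 * N^2 * p y ^ 3 := by
        intro y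
        have h4 : |κ * j * p y| ≤ 1 := by
          rw [abs_mul, abs_mul, abs_of_nonneg (hp y), Nat.abs_cast, mul_assoc]
          refine le_trans ?_ (hκ y)
          have := hp y
          gcongr
        have h5 := (abs_le.1 (Real.abs_exp_sub_one_sub_id_le h4)).2
        have h6 : (κ * j * p y)^2 ≤ κ^2 * N^2 * p y ^ 2 := by
          rw [mul_pow, mul_pow]; gcongr
        calc p y * Real.exp (κ * j * p y) ≤ p y * (1 + κ * j * p y + κ^2 * N^2 * p y ^ 2) :=
              mul_le_mul_of_nonneg_left (by linarith) (hp y)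
          _ = _ := by ring
      refine (Finset.sum_le_sum fun y _ => h3 y).trans ?_
      rw [Finset.sum_add_distrib, Finset.sum_add_distrib, hp1, ← Finset.mul_sum, ← Finset.mul_sum]
      have := Real.add_one_le_exp (κ * j * ∑ x, p x ^ 2 + κ^2 * N^2 * ∑ x, p x ^ 3)
      linarith
    have h7 := ih (j+1) (by omega)
    refine (mul_le_mul h2 h7 ?_ (Real.exp_pos _).le).trans ?_
    · exact Finset.sum_nonneg fun ω _ => mul_nonneg (Finset.prod_nonneg fun i _ => hp _)
        (Real.exp_pos _).le
    · rw [← Real.exp_add]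
      apply le_of_eq
      congr 1
      push_cast
      ring

end

/-- Binomial expectation. -/
noncomputable def B (p : ℝ) : ℕ → (ℕ → ℝ) → ℝ
  | 0, g => g 0
  | n+1, g => (1 - p) * B p n g + p * B p n (fun k => g (k+1))

theorem B_mono {p : ℝ} (h0 : 0 ≤ p) (h1 : p ≤ 1) (n : ℕ) : ∀ {f g : ℕ → ℝ}, (∀ k, f k ≤ g k) → 
    B p n f ≤ B p n g := by
  induction n with
  | zero => intro f g h; exact h 0
  | succ n ih => 
    intro f g h
    have := ih h
    have h2 := ih (f := fun k => f (k+1)) (g := fun k => g (k+1)) (fun k => h _)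
    have h3 : 0 ≤ 1 - p := by linarith
    simp only [B]
    gcongr

theorem B_lin (p : ℝ) (n : ℕ) : ∀ (a b : ℝ) (f g : ℕ → ℝ),
    B p n (fun k => a * f k + b * g k) = a * B p n f + b * B p n g := by
  induction n with
  | zero => intro a b f g; rfl
  | succ n ih => 
    intro a b f g
    simp only [B, ih]
    ring

theorem B_zero (p : ℝ) (n : ℕ) : B p n (fun _ => 0) = 0 := by
  induction n with
  | zero => rfl
  | succ n ih => simp [B, ih]

theorem B_pow (p y : ℝ) (n : ℕ) : B p n (fun k => y^k) = (1 + p * (y-1))^n := by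
  induction n with
  | zero => simp [B]
  | succ n ih => 
    have : B p n (fun k => y^(k+1)) = y * B p n (fun k => y^k) := by
      have := B_lin p n y 0 (fun k => y^k) (fun k => y^k)
      simp only [zero_mul, add_zero] at this
      rw [← this]; congr 1; ext k; ring
    simp only [B, this, ih]; ring

theorem B_pow1 {p y : ℝ} (hp : 0 ≤ p) (hy : 1 ≤ y) (n : ℕ) :
    B p n (fun k => k * y^k) ≤ n * p * y * (1 + p * (y-1))^n := by
  induction n with
  | zero => simp [B]
  | succ n ih => 
    have h1 : B p n (fun k => ((k+1 : ℕ) : ℝ) * y^(k+1)) = 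
        y * B p n (fun k => k * y^k) + y * B p n (fun k => y^k) := by
      rw [← B_lin]; congr 1; ext k; push_cast; ring
    simp only [B, h1, B_pow]
    have hz : 1 ≤ 1 + p * (y-1) := by nlinarith
    set z := 1 + p * (y-1) with hzd
    have h2 := mul_le_mul_of_nonneg_left ih (by linarith : 0 ≤ z)
    have h3 : p * y * z^n * 1 ≤ p * y * z^n * z := by gcongr
    push_cast
    rw [pow_succ]
    have : 1 - p + p * y = z := by rw [hzd]; ring
    linear_combination h2 + h3 + B p n (fun k => k * y^k) * this

theorem B_pow2 {p y : ℝ} (hp : 0 ≤ p) (hy : 1 ≤ y) (n : ℕ) :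
    B p n (fun k => (k * (k-1)) * y^k) ≤ (n * (n-1)) * p^2 * y^2 * (1 + p * (y-1))^n := by
  induction n with
  | zero => simp [B]
  | succ n ih => 
    have h1 : B p n (fun k => (((k+1 : ℕ) : ℝ) * (((k+1 : ℕ) : ℝ) - 1)) * y^(k+1)) = 
        y * B p n (fun k => (k * (k-1)) * y^k) + (2 * y) * B p n (fun k => k * y^k) := by
      rw [← B_lin]; congr 1; ext k; push_cast; ring
    simp only [B, h1]
    have hz : 1 ≤ 1 + p * (y-1) := by nlinarith
    have hb := B_pow1 hp hy n
    set z := 1 + p * (y-1) with hzd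
    have h2 := mul_le_mul_of_nonneg_left ih (by linarith : 0 ≤ z)
    have h3 : p^2 * y^2 * z^n * (2 * n) * 1 ≤ p^2 * y^2 * z^n * (2 * n) * z := by gcongr
    have h4 := mul_le_mul_of_nonneg_left hb (by positivity : 0 ≤ p * (2 * y))
    push_cast
    rw [pow_succ]
    have : 1 - p + p * y = z := by rw [hzd]; ring
    linear_combination h2 + h3 + h4 + B p n (fun k => (k * (k-1)) * y^k) * this

theorem one_add_pow_le {p y : ℝ} (hp : 0 ≤ p) (hy : 1 ≤ y) (n : ℕ) :
    (1 + p * (y-1))^n ≤ Real.exp (n * p * (y-1)) := by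
  have h : 0 ≤ p * (y-1) := mul_nonneg hp (by linarith)
  calc (1 + p * (y-1))^n ≤ (Real.exp (p * (y-1)))^n := by
        gcongr
        have := Real.add_one_le_exp (p * (y-1)); linarith
    _ = _ := by rw [← Real.exp_nat_mul]; congr 1; ring

section
variable {α : Type}

theorem prod_ge [DecidableEq α] (s : Finset α) (G t : α → ℝ) (hG : ∀ x, 0 ≤ G x) (ht : ∀ x, 0 ≤ t x) :
    ∏ x ∈ s, G x + ∑ y ∈ s, t y * ∏ x ∈ s.erase y, G x ≤ ∏ x ∈ s, (G x + t x) := by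
  induction s using Finset.induction_on with
  | empty => simp
  | insert a s ha ih =>
    rw [Finset.prod_insert ha, Finset.prod_insert ha, Finset.sum_insert ha, Finset.erase_insert ha]
    have h1 : ∑ y ∈ s, t y * ∏ x ∈ (insert a s).erase y, G x = 
        G a * ∑ y ∈ s, t y * ∏ x ∈ s.erase y, G x := by
      rw [Finset.mul_sum]
      refine Finset.sum_congr rfl fun y hy => ?_
      have hya : a ≠ y := by rintro rfl; exact ha hy
      rw [Finset.erase_insert_of_ne hya, Finset.prod_insert (by simp [ha])]
      ring
    rw [h1]
    have h2 := mul_le_mul_of_nonneg_left ih (add_nonneg (hG a) (ht a))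
    have h3 : 0 ≤ t a * ∑ y ∈ s, t y * ∏ x ∈ s.erase y, G x :=
      mul_nonneg (ht a) (Finset.sum_nonneg fun y _ => mul_nonneg (ht y) 
        (Finset.prod_nonneg fun x _ => hG x))
    linarith

variable [Fintype α] [DecidableEq α]

/-- Negative association. -/
theorem E_prod_le {p : α → ℝ} (hp : ∀ x, 0 ≤ p x) (hp1 : ∑ x, p x = 1) (hple : ∀ x, p x ≤ 1)
    (n : ℕ) : ∀ g : α → ℕ → ℝ, (∀ x, Monotone (g x)) → (∀ x k, 0 ≤ g x k) → 
    E p n (fun ω => ∏ x, g x (cnt ω x)) ≤ ∏ x, B (p x) n (g x) := by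
  induction n with
  | zero => intro g _ _; rw [E_zero]; simp [cnt_zero, B]
  | succ n ih =>
    intro g hm h0
    rw [E_succ]
    simp only [cnt_cons]
    set G : α → ℝ := fun x => B (p x) n (g x) with hG
    set H : α → ℝ := fun x => B (p x) n (fun k => g x (k+1)) with hH
    have hG0 : ∀ x, 0 ≤ G x := fun x => by
      rw [hG, ← B_zero (p x) n]; exact B_mono (hp x) (hple x) n (h0 x)
    have hGH : ∀ x, G x ≤ H x := fun x => 
      B_mono (hp x) (hple x) n (fun k => hm x (Nat.le_succ k))
    have h1 : ∀ y, E p n (fun ω => ∏ x, g x (cnt ω x + if y = x then 1 else 0)) ≤ 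
        H y * ∏ x ∈ Finset.univ.erase y, G x := by
      intro y
      refine (ih (fun x k => g x (k + if y = x then 1 else 0)) 
        (fun x a b hab => hm x (by omega)) (fun x k => h0 _ _)).trans ?_
      rw [← Finset.mul_prod_erase _ _ (Finset.mem_univ y)]
      apply le_of_eq
      congr 1
      · simp [hH]
      · refine Finset.prod_congr rfl fun x hx => ?_
        have : y ≠ x := (Finset.ne_of_mem_erase hx).symm
        simp [this, hG]
    calc _ ≤ ∑ y, p y * (H y * ∏ x ∈ Finset.univ.erase y, G x) := 
          Finset.sum_le_sum fun y _ => mul_le_mul_of_nonneg_left (h1 y) (hp y)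
      _ = ∏ x, G x + ∑ y, (p y * (H y - G y)) * ∏ x ∈ Finset.univ.erase y, G x := by
          have h2 : ∀ y, p y * (H y * ∏ x ∈ Finset.univ.erase y, G x) = p y * ∏ x, G x + 
              (p y * (H y - G y)) * ∏ x ∈ Finset.univ.erase y, G x := by
            intro y
            rw [← Finset.mul_prod_erase _ G (Finset.mem_univ y)]; ring
          simp only [h2, Finset.sum_add_distrib]
          rw [← Finset.sum_mul, hp1, one_mul]
      _ ≤ ∏ x, (G x + p x * (H x - G x)) := prod_ge _ _ _ hG0 
            (fun x => mul_nonneg (hp x) (sub_nonneg.2 (hGH x)))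
      _ = _ := by
          refine Finset.prod_congr rfl fun x _ => ?_
          simp only [B, hG, hH]; ring

theorem E_marg {p : α → ℝ} (hp1 : ∑ x, p x = 1) (x : α) (n : ℕ) : ∀ f : ℕ → ℝ, 
    E p n (fun ω => f (cnt ω x)) = B (p x) n f := by
  induction n with
  | zero => intro f; rw [E_zero]; simp [cnt_zero, B]
  | succ n ih =>
    intro f
    rw [E_succ]
    simp only [cnt_cons, B]
    rw [← Finset.add_sum_erase _ _ (Finset.mem_univ x)]
    have h1 : ∑ y ∈ Finset.univ.erase x, p y * E p n (fun ω => f (cnt ω x + if y = x then 1 else 0))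
        = ∑ y ∈ Finset.univ.erase x, p y * B (p x) n f := by
      refine Finset.sum_congr rfl fun y hy => ?_
      simp [Finset.ne_of_mem_erase hy, ih]
    have h2 := Finset.add_sum_erase _ p (Finset.mem_univ x)
    rw [h1, ← Finset.sum_mul]
    simp only [if_true, ih (fun k => f (k+1))]
    rw [show ∑ y ∈ Finset.univ.erase x, p y = 1 - p x by linarith]
    ring

end


theorem exp_two_lt : Real.exp 2 ≤ 8 := by
  have h := Real.exp_one_lt_d9
  have : Real.exp 2 = Real.exp 1 ^ 2 := by rw [← Real.exp_nat_mul]; norm_num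
  rw [this]
  nlinarith [Real.exp_pos 1]

theorem B_r {p ϑ : ℝ} (n : ℕ) (h0 : 0 ≤ p) (h1 : p ≤ 1) (hϑ : 0 ≤ ϑ) (hm : ϑ * (n * p) ≤ 1/4) :
    B p n (fun k => Real.exp (2 * ((n * p) * min (ϑ * k) ((ϑ * k)^2)))) ≤
      Real.exp (32 * ϑ^2 * ((n*p)^2 + (n*p)^3)) := by
  have hm0 : 0 ≤ n * p := by positivity
  set m := n * p with hmd
  set y := Real.exp (16 * ϑ^2 * m^2) with hy
  have hy1 : 1 ≤ y := Real.one_le_exp (by positivity)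
  have hpt : ∀ k : ℕ, Real.exp (2 * (m * min (ϑ * k) ((ϑ * k)^2))) ≤ 
      1 * y^k + (2 * m * ϑ^2 * Real.exp (-8 * m)) * (k * (Real.exp 2)^k) := by
    intro k
    have hyk : y^k = Real.exp (16 * ϑ^2 * m^2 * k) := by
      rw [hy, ← Real.exp_nat_mul]; congr 1; ring
    have hek : (Real.exp 2)^k = Real.exp (2 * k) := by
      rw [← Real.exp_nat_mul]; congr 1; ring
    have hk0 : (0:ℝ) ≤ k := Nat.cast_nonneg k
    rcases le_total (k:ℝ) (8 * m) with hk | hk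
    · have h2 : 2 * (m * min (ϑ * k) ((ϑ * k)^2)) ≤ 16 * ϑ^2 * m^2 * k := by
        have h3 : min (ϑ * k) ((ϑ * k)^2) ≤ (ϑ * k)^2 := min_le_right _ _
        have h4 : m * min (ϑ * k) ((ϑ * k)^2) ≤ m * (ϑ * k)^2 := by gcongr
        have h5 : (m * ϑ^2 * k) * k ≤ (m * ϑ^2 * k) * (8 * m) := by gcongr
        nlinarith
      have h6 : 0 ≤ (2 * m * ϑ^2 * Real.exp (-8 * m)) * (k * (Real.exp 2)^k) := by positivity
      rw [hyk]
      have := Real.exp_le_exp.2 h2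
      linarith
    · set v := 2 * (m * min (ϑ * k) ((ϑ * k)^2)) with hv
      have hv0 : 0 ≤ v := by positivity
      have hv1 : v ≤ 2 * m * ϑ^2 * k^2 := by
        have h3 : min (ϑ * k) ((ϑ * k)^2) ≤ (ϑ * k)^2 := min_le_right _ _
        have h4 : m * min (ϑ * k) ((ϑ * k)^2) ≤ m * (ϑ * k)^2 := by gcongr
        nlinarith
      have hv2 : v ≤ k / 2 := by
        have h3 : min (ϑ * k) ((ϑ * k)^2) ≤ (ϑ * k) := min_le_left _ _
        have h4 : m * min (ϑ * k) ((ϑ * k)^2) ≤ m * (ϑ * k) := by gcongr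
        have h5 : (ϑ * m) * k ≤ (1/4) * k := by gcongr
        nlinarith
      have hev : Real.exp v ≤ 1 + v * Real.exp v := by
        have h3 := Real.add_one_le_exp (-v)
        have h4 : Real.exp (-v) * Real.exp v = 1 := by rw [← Real.exp_add]; simp
        nlinarith [Real.exp_pos v]
      have hk2 : (k:ℝ) ≤ Real.exp (k/2) := by
        have := Real.quadratic_le_exp_of_nonneg (by positivity : 0 ≤ (k:ℝ)/2)
        nlinarith [sq_nonneg ((k:ℝ) - 2)]
      have h6 : v * Real.exp v ≤ (2 * m * ϑ^2 * k^2) * Real.exp (k/2) := by gcongr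
      have h7 : (2 * m * ϑ^2 * k^2) * Real.exp (k/2) ≤ 
          (2 * m * ϑ^2 * (k * Real.exp (k/2))) * Real.exp (k/2) := by
        rw [sq (k:ℝ)]; gcongr
      have h8 : (2 * m * ϑ^2 * (k * Real.exp (k/2))) * Real.exp (k/2) = 
          2 * m * ϑ^2 * k * Real.exp k := by
        have : Real.exp (k:ℝ) = Real.exp (k/2) * Real.exp (k/2) := by
          rw [← Real.exp_add]; congr 1; ring
        rw [this]; ring
      have h9 : Real.exp (k:ℝ) ≤ Real.exp (-8 * m) * Real.exp (2 * k) := by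
        rw [← Real.exp_add]; apply Real.exp_le_exp.2; linarith
      have h10 : 2 * m * ϑ^2 * k * Real.exp k ≤ 
          2 * m * ϑ^2 * k * (Real.exp (-8 * m) * Real.exp (2 * k)) := by gcongr
      have h11 : 1 ≤ y^k := one_le_pow₀ hy1
      rw [hek]
      calc Real.exp v ≤ 1 + 2 * m * ϑ^2 * k * (Real.exp (-8 * m) * Real.exp (2 * k)) := by linarith
        _ ≤ _ := by linarith
  refine (B_mono h0 h1 n hpt).trans ?_
  rw [B_lin, B_pow]
  have he2 : 1 ≤ Real.exp 2 := Real.one_le_exp (by norm_num)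
  have hb := B_pow1 h0 he2 n
  have hc := one_add_pow_le h0 he2 n
  have hd := one_add_pow_le h0 hy1 n
  rw [← hmd] at hb hc hd
  have hw1 : 16 * ϑ^2 * m^2 ≤ 1 := by
    have : (ϑ * m)^2 ≤ (1/4)^2 := by gcongr
    nlinarith
  have hy2 : y - 1 ≤ 32 * ϑ^2 * m^2 := by
    have hw0 : 0 ≤ 16 * ϑ^2 * m^2 := by positivity
    have h5 := (abs_le.1 (Real.abs_exp_sub_one_sub_id_le (x := 16 * ϑ^2 * m^2) 
      (by rw [abs_of_nonneg hw0]; exact hw1))).2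
    rw [← hy] at h5
    nlinarith
  have hA : (1 + p * (y-1))^n ≤ Real.exp (32 * ϑ^2 * m^3) := by
    refine hd.trans (Real.exp_le_exp.2 ?_)
    have := mul_le_mul_of_nonneg_left hy2 hm0
    nlinarith
  have hB : Real.exp (-8 * m) * B p n (fun k => k * Real.exp 2 ^ k) ≤ 8 * m := by
    have h3 : (1 + p * (Real.exp 2 - 1))^n ≤ Real.exp (8 * m) := by
      refine hc.trans (Real.exp_le_exp.2 ?_)
      nlinarith [exp_two_lt]
    calc Real.exp (-8 * m) * B p n (fun k => k * Real.exp 2 ^ k) 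
        ≤ Real.exp (-8 * m) * (m * 8 * Real.exp (8 * m)) := by
          gcongr
          refine hb.trans ?_
          gcongr
          exact exp_two_lt
      _ = 8 * m * (Real.exp (-8 * m) * Real.exp (8 * m)) := by ring
      _ = 8 * m := by rw [← Real.exp_add]; simp
  have hC : 2 * m * ϑ^2 * Real.exp (-8 * m) * B p n (fun k => k * Real.exp 2 ^ k) ≤ 
      16 * ϑ^2 * m^2 := by
    have : 0 ≤ 2 * m * ϑ^2 := by positivity
    have := mul_le_mul_of_nonneg_left hB this
    nlinarith
  have hD : Real.exp (32 * ϑ^2 * (m^2 + m^3)) = 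
      Real.exp (32 * ϑ^2 * m^3) * Real.exp (32 * ϑ^2 * m^2) := by
    rw [← Real.exp_add]; congr 1; ring
  rw [hD]
  have hE : 1 + 32 * ϑ^2 * m^2 ≤ Real.exp (32 * ϑ^2 * m^2) := by
    have := Real.add_one_le_exp (32 * ϑ^2 * m^2); linarith
  have hF : 1 ≤ Real.exp (32 * ϑ^2 * m^3) := Real.one_le_exp (by positivity)
  have hG : 0 ≤ ϑ^2 * m^2 := by positivity
  nlinarith

theorem exp_mid (x y : ℝ) : Real.exp ((x + y)/2) ≤ (Real.exp x + Real.exp y)/2 := by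
  have h1 : Real.exp x = Real.exp (x/2) ^ 2 := by rw [← Real.exp_nat_mul]; congr 1; push_cast; ring
  have h2 : Real.exp y = Real.exp (y/2) ^ 2 := by rw [← Real.exp_nat_mul]; congr 1; push_cast; ring
  rw [add_div, Real.exp_add, h1, h2]
  nlinarith [sq_nonneg (Real.exp (x/2) - Real.exp (y/2))]

section
variable {α : Type} [Fintype α] [DecidableEq α]

theorem key {p : α → ℝ} (hp : ∀ x, 0 ≤ p x) (hp1 : ∑ x, p x = 1) (n : ℕ) (θ s : ℝ) (hθ : 0 ≤ θ)
    (hs : |s| = 1) (hθp : ∀ x, 8 * θ * (n * p x) ≤ 1) (G : (Fin n → α) → Prop) [DecidablePred G]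
    (hG : ∀ ω, G ω → ∀ x, ∀ k ≤ cnt ω x, Real.exp (2 * s * θ * (k:ℝ)) - 1 ≤
      2 * s * θ * (k:ℝ) + min (2 * θ * k) ((2 * θ * k)^2)) :
    E p n (fun ω => if G ω then Real.exp (s * θ * ((S ω : ℝ)/2 - n * (n-1) / 2 * ∑ x, p x ^ 2)
      - 36 * θ^2 * (n^2 * ∑ x, p x^2 + n^3 * ∑ x, p x^3)) else 0) ≤ 1 := by
  have hple : ∀ x, p x ≤ 1 := fun x => by
    rw [← hp1]; exact Finset.single_le_sum (fun y _ => hp y) (Finset.mem_univ x)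
  set Q := ∑ x, p x ^ 2 with hQ
  set P := ∑ x, p x ^ 3 with hP
  set V := n^2 * Q + n^3 * P with hV
  have hs2 : s^2 = 1 := by rw [← sq_abs, hs]; norm_num
  set A : (Fin n → α) → ℝ := comp p (fun k => Real.exp (2 * s * θ * (k:ℝ)) - 1) n with hA
  set L : (Fin n → α) → ℝ := comp p (fun k => (k:ℝ)) n with hL
  set r : ℕ → ℝ := fun k => min (2 * θ * k) ((2 * θ * k)^2) with hr
  have hrm : Monotone r := by
    intro a b hab
    have : (a:ℝ) ≤ b := by exact_mod_cast hab
    simp only [hr]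
    gcongr
  set R : (Fin n → α) → ℝ := fun ω => ∑ x, (n * p x) * r (cnt ω x) with hR
  have e1 : E p n (fun ω => Real.exp (2 * s * θ * (S ω : ℝ) / 2 - A ω)) ≤ 1 := 
    E_super hp hp1 (2 * s * θ) n
  have e2 : E p n (fun ω => Real.exp (4 * s * θ * L ω - 
      (4 * s * θ * (n * (n-1) / 2) * Q + 16 * θ^2 * n^3 * P))) ≤ 1 := by
    have h := E_lin hp hp1 (4 * s * θ) n (fun x => by
      rw [abs_mul, abs_mul, hs, abs_of_nonneg hθ]
      have := hθp x
      have h2 : 0 ≤ θ * (n * p x) := mul_nonneg hθ (mul_nonneg (Nat.cast_nonneg n) (hp x))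
      norm_num
      nlinarith) n 0 (by omega)
    simp only [Nat.cast_zero, zero_mul, add_zero, mul_zero, zero_add] at h
    have h2 : ∀ ω, Real.exp (4 * s * θ * L ω - 
      (4 * s * θ * (n * (n-1) / 2) * Q + 16 * θ^2 * n^3 * P)) = 
      Real.exp (- (4 * s * θ * (n * (n-1) / 2) * Q + 16 * θ^2 * n^3 * P)) * 
        Real.exp (4 * s * θ * L ω) := fun ω => by rw [← Real.exp_add]; congr 1; ring
    simp only [h2, E_smul]
    calc _ ≤ Real.exp (- (4 * s * θ * (n * (n-1) / 2) * Q + 16 * θ^2 * n^3 * P)) * _ := 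
          mul_le_mul_of_nonneg_left h (Real.exp_pos _).le
      _ = 1 := by
          rw [← Real.exp_add, Real.exp_eq_one_iff]
          linear_combination (16 * θ^2 * n^3 * P) * hs2
  have e3 : E p n (fun ω => Real.exp (2 * R ω - 128 * θ^2 * V)) ≤ 1 := by
    have h2 : ∀ ω, Real.exp (2 * R ω - 128 * θ^2 * V) = Real.exp (-(128 * θ^2 * V)) * 
        ∏ x, Real.exp (2 * ((n * p x) * r (cnt ω x))) := fun ω => by
      rw [← Real.exp_sum, ← Real.exp_add, ← Finset.mul_sum]; congr 1; ring
    simp only [h2, E_smul]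
    have h3 := E_prod_le hp hp1 hple n (fun x k => Real.exp (2 * ((n * p x) * r k))) 
      (fun x a b hab => by
        have := hrm hab
        have h4 : 0 ≤ n * p x := mul_nonneg (Nat.cast_nonneg n) (hp x)
        simp only
        gcongr) (fun x k => (Real.exp_pos _).le)
    have h5 : ∏ x, B (p x) n (fun k => Real.exp (2 * ((n * p x) * r k))) ≤ 
        ∏ x, Real.exp (32 * (2*θ)^2 * ((n*p x)^2 + (n*p x)^3)) := by
      refine Finset.prod_le_prod (fun x _ => ?_) (fun x _ => ?_)
      · rw [← B_zero (p x) n]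
        exact B_mono (hp x) (hple x) n (fun k => (Real.exp_pos _).le)
      · exact B_r n (hp x) (hple x) (by linarith) (by linarith [hθp x])
    calc _ ≤ Real.exp (-(128 * θ^2 * V)) * _ := 
          mul_le_mul_of_nonneg_left (h3.trans h5) (Real.exp_pos _).le
      _ = 1 := by
          rw [← Real.exp_sum, ← Real.exp_add, Real.exp_eq_one_iff, ← Finset.mul_sum, 
            Finset.sum_add_distrib]
          simp only [mul_pow, ← Finset.mul_sum]
          rw [hV]; ring
  have hpt : ∀ ω, (if G ω then Real.exp (s * θ * ((S ω : ℝ)/2 - n * (n-1) / 2 * Q)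
      - 36 * θ^2 * V) else 0) ≤ (1/2) * Real.exp (2 * s * θ * (S ω : ℝ) / 2 - A ω) + 
      ((1/4) * Real.exp (4 * s * θ * L ω - 
        (4 * s * θ * (n * (n-1) / 2) * Q + 16 * θ^2 * n^3 * P)) + 
      (1/4) * Real.exp (2 * R ω - 128 * θ^2 * V)) := by
    intro ω
    split_ifs with hg
    · have hc : A ω ≤ 2 * s * θ * L ω + R ω := comp_le hp _ r _ hrm ω (hG ω hg)
      set a := 2 * s * θ * (S ω : ℝ) / 2 - A ω with ha
      set b := 4 * s * θ * L ω - (4 * s * θ * (n * (n-1) / 2) * Q + 16 * θ^2 * n^3 * P) with hb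
      set d := 2 * R ω - 128 * θ^2 * V with hd
      have hQ0 : 0 ≤ θ^2 * (n^2 * Q) := by
        have : 0 ≤ Q := Finset.sum_nonneg fun x _ => pow_nonneg (hp x) 2
        positivity
      have h1 : s * θ * ((S ω : ℝ)/2 - n * (n-1) / 2 * Q) - 36 * θ^2 * V ≤ (a + (b+d)/2)/2 := by
        rw [ha, hb, hd, hV]
        linarith
      have h2 := Real.exp_le_exp.2 h1
      have h3 := exp_mid a ((b+d)/2)
      have h4 := exp_mid b d
      linarith
    · positivity
  refine (E_mono hp hpt).trans ?_
  rw [E_add, E_add, E_smul, E_smul, E_smul]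
  linarith

theorem trunc {p : α → ℝ} (hp : ∀ x, 0 ≤ p x) (hp1 : ∑ x, p x = 1) (n : ℕ) (M : ℝ) (hM : 1 ≤ M)
    (hm : ∀ x, 4 * (n * p x) ≤ M) :
    E p n (fun ω => if ∀ x, (cnt ω x : ℝ) ≤ M then 0 else 1) ≤ 
      8 * (n^2 * ∑ x, p x^2) * Real.exp (-M/2) := by
  have hpt : ∀ ω : Fin n → α, (if ∀ x, (cnt ω x : ℝ) ≤ M then (0:ℝ) else 1) ≤ 
      Real.exp (-M) * ∑ x, ((cnt ω x : ℝ) * (cnt ω x - 1)) * Real.exp 1 ^ (cnt ω x) := by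
    intro ω
    have hnn : ∀ k : ℕ, 0 ≤ ((k : ℝ) * (k - 1)) * Real.exp 1 ^ k := by
      intro k
      rcases k with _ | k
      · simp
      · push_cast; simp; positivity
    split_ifs with h
    · exact mul_nonneg (Real.exp_pos _).le (Finset.sum_nonneg fun x _ => hnn _)
    · push Not at h
      obtain ⟨x, hx⟩ := h
      have h1 := Finset.single_le_sum (f := fun x => ((cnt ω x : ℝ) * (cnt ω x - 1)) * 
        Real.exp 1 ^ (cnt ω x)) (fun y _ => hnn _) (Finset.mem_univ x)
      refine le_trans ?_ (mul_le_mul_of_nonneg_left h1 (Real.exp_pos _).le)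
      have h2 : (2:ℝ) ≤ cnt ω x := by
        have : 1 < cnt ω x := by exact_mod_cast hM.trans_lt hx
        exact_mod_cast this
      have h3 : 1 ≤ Real.exp (-M) * Real.exp 1 ^ (cnt ω x) := by
        rw [← Real.exp_nat_mul, ← Real.exp_add]
        exact Real.one_le_exp (by linarith)
      have h4 : 1 ≤ (cnt ω x : ℝ) * (cnt ω x - 1) := by nlinarith
      calc (1:ℝ) ≤ ((cnt ω x : ℝ) * (cnt ω x - 1)) * (Real.exp (-M) * Real.exp 1 ^ (cnt ω x)) := 
            one_le_mul_of_one_le_of_one_le h4 h3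
        _ = _ := by ring
  refine (E_mono hp hpt).trans ?_
  rw [E_smul, E_sum]
  have he1 : 1 ≤ Real.exp 1 := Real.one_le_exp (by norm_num)
  have hx : ∀ x, E p n (fun ω => ((cnt ω x : ℝ) * (cnt ω x - 1)) * Real.exp 1 ^ (cnt ω x)) ≤ 
      8 * n^2 * Real.exp (M/2) * p x ^ 2 := by
    intro x
    rw [E_marg hp1 x n (fun k => ((k:ℝ) * (k-1)) * Real.exp 1 ^ k)]
    refine (B_pow2 (hp x) he1 n).trans ?_
    have h1 : (1 + p x * (Real.exp 1 - 1))^n ≤ Real.exp (M/2) := by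
      refine (one_add_pow_le (hp x) he1 n).trans (Real.exp_le_exp.2 ?_)
      have h2 := Real.exp_one_lt_d9
      have h3 : 0 ≤ n * p x := mul_nonneg (Nat.cast_nonneg n) (hp x)
      have := hm x
      nlinarith
    have h4 : (n:ℝ) * (n-1) ≤ n^2 := by nlinarith [(Nat.cast_nonneg n : (0:ℝ) ≤ n)]
    have h5 : Real.exp 1 ^ 2 ≤ 8 := by
      rw [← Real.exp_nat_mul]; norm_num; exact exp_two_lt
    have h6 : 0 ≤ 1 + p x * (Real.exp 1 - 1) := by
      have := mul_nonneg (hp x) (sub_nonneg.2 he1); linarith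
    calc (n * (n-1)) * p x^2 * Real.exp 1^2 * (1 + p x * (Real.exp 1-1))^n 
        ≤ n^2 * p x^2 * 8 * Real.exp (M/2) := by gcongr
      _ = _ := by ring
  calc _ ≤ Real.exp (-M) * ∑ x, 8 * n^2 * Real.exp (M/2) * p x ^ 2 := 
        mul_le_mul_of_nonneg_left (Finset.sum_le_sum fun x _ => hx x) (Real.exp_pos _).le
    _ = 8 * (n^2 * ∑ x, p x^2) * (Real.exp (-M) * Real.exp (M/2)) := by
        rw [← Finset.mul_sum]; ring
    _ = _ := by rw [← Real.exp_add]; congr 2; ring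

set_option maxHeartbeats 1000000 in
theorem real_tail {p : α → ℝ} (hp : ∀ x, 0 ≤ p x) (hp1 : ∑ x, p x = 1) (n : ℕ) (hn : 2 ≤ n)
    (ε pm μ : ℝ) (hε : 0 < ε) (hpm : ∀ x, p x ≤ pm) (hpm0 : 0 < pm) (hμ : 0 < μ)
    (h1 : μ * (n^2 * ∑ x, p x^2 + n^3 * ∑ x, p x^3) ≤ n^4 * ε^2)
    (h2 : μ * pm ≤ n * ε) (h3 : μ ≤ n * Real.sqrt ε) :
    E p n (fun ω => if ε < |collEst n ω - ∑ x, p x^2| then 1 else 0) ≤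
      3074 * Real.exp (-(1/2304) * μ) := by
  have hn0 : (2:ℝ) ≤ n := by exact_mod_cast hn
  set Q := ∑ x, p x ^ 2 with hQ
  set P := ∑ x, p x ^ 3 with hP
  set V := n^2 * Q + n^3 * P with hV
  have hP0 : 0 ≤ P := Finset.sum_nonneg fun x _ => pow_nonneg (hp x) 3
  have hQ0 : 0 ≤ Q := Finset.sum_nonneg fun x _ => pow_nonneg (hp x) 2
  have hnε : 0 < n^2 * ε := by positivity
  set θ := μ / (288 * (n^2 * ε)) with hθ
  have hθ0 : 0 < θ := by positivity
  have hθμ : μ = 288 * θ * (n^2 * ε) := by rw [hθ]; field_simp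
  have hμ2 : μ^2 ≤ n^2 * ε := by
    calc μ^2 ≤ (n * Real.sqrt ε)^2 := by gcongr
      _ = n^2 * ε := by rw [mul_pow, Real.sq_sqrt hε.le]
  -- theta mu <= 1/288
  have hθμ1 : 288 * θ * μ ≤ 1 := by
    have : 288 * θ * μ * (n^2 * ε) ≤ 1 * (n^2 * ε) := by nlinarith
    exact le_of_mul_le_mul_right this hnε
  have hθpm : 288 * θ * (n * pm) ≤ 1 := by
    have : 288 * θ * (n * pm) * (n * ε) ≤ 1 * (n * ε) := by
      calc _ = μ * pm := by rw [hθμ]; ring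
        _ ≤ _ := by linarith
    exact le_of_mul_le_mul_right this (by positivity)
  have hθV : 288 * θ^2 * V ≤ μ / 288 := by
    have : 288 * θ * V * (n^2 * ε) ≤ (n^2 * ε) * (n^2 * ε) := by
      calc _ = μ * V := by rw [hθμ]; ring
        _ ≤ _ := by linarith
    have h5 := le_of_mul_le_mul_right this hnε
    have h6 := mul_le_mul_of_nonneg_left h5 hθ0.le
    linarith
  by_cases hM : 2 * θ ≤ 1
  swap
  · have hμ1 : μ ≤ 1 := by nlinarith
    have h5 : E p n (fun ω => if ε < |collEst n ω - Q| then 1 else 0) ≤ 1 := by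
      refine le_trans (b := E p n (fun _ => 1)) ?_ (E_one hp1 n).le
      apply E_mono hp
      intro ω
      split_ifs <;> norm_num
    refine h5.trans ?_
    have := Real.add_one_le_exp (-(1/2304) * μ)
    linarith
  set M := 1 / (2 * θ) with hMd
  have hMθ : 2 * θ * M = 1 := by rw [hMd]; field_simp
  have hM0 : 0 < M := by positivity
  have hM1 : 1 ≤ M := by nlinarith
  have hμM : 144 * μ ≤ M := by
    have : 144 * μ * (2 * θ) ≤ M * (2 * θ) := by linarith
    exact le_of_mul_le_mul_right this (by positivity)
  have hθx : ∀ x, 288 * θ * (n * p x) ≤ 1 := fun x => by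
    refine le_trans ?_ hθpm
    gcongr
    exact hpm x
  have hmx : ∀ x, 144 * (n * p x) ≤ M := fun x => by
    have : 144 * (n * p x) * (2 * θ) ≤ M * (2 * θ) := by linarith [hθx x]
    exact le_of_mul_le_mul_right this (by positivity)
  have hnp0 : ∀ x, 0 ≤ n * p x := fun x => mul_nonneg (Nat.cast_nonneg n) (hp x)
  have hθ8 : ∀ x, 8 * θ * (n * p x) ≤ 1 := fun x => by
    have := mul_nonneg hθ0.le (hnp0 x)
    linarith [hθx x]
  -- truncation
  have hT := trunc hp hp1 n M hM1 (fun x => by linarith [hmx x, hnp0 x])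
  have hnε2 : n^2 * ε = μ * M / 144 := by
    have : n^2 * ε * (2 * θ) = μ * M / 144 * (2 * θ) := by
      rw [hθμ]; linear_combination (-2 * θ * (n^2*ε)) * hMθ
    exact mul_right_cancel₀ (by positivity) this
  have hnQ : n^2 * Q ≤ M^3 := by
    have h5 : μ * (n^2 * Q) ≤ (n^2 * ε)^2 := by
      have : 0 ≤ μ * (n^3 * P) := by positivity
      nlinarith
    rw [hnε2] at h5
    have h6 : μ * (n^2 * Q) ≤ μ * (μ * M^2 / 144^2) := by
      calc _ ≤ _ := h5
        _ = _ := by ring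
    have h7 := le_of_mul_le_mul_left h6 hμ
    have h8 : μ * M^2 ≤ M * M^2 := by gcongr; linarith
    have h9 : 0 < M^3 := by positivity
    linarith
  have hT2 : E p n (fun ω => if ∀ x, (cnt ω x : ℝ) ≤ M then 0 else 1) ≤ 
      3072 * Real.exp (-(1/2304) * μ) := by
    refine hT.trans ?_
    have h5 : (M/4)^3 / 6 ≤ Real.exp (M/4) := by
      have := Real.pow_div_factorial_le_exp (M/4) (by positivity) 3
      norm_num [Nat.factorial] at this ⊢
      linarith
    have h6 : n^2 * Q ≤ 384 * Real.exp (M/4) := by linarith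
    calc 8 * (n^2 * Q) * Real.exp (-M/2) ≤ 8 * (384 * Real.exp (M/4)) * Real.exp (-M/2) := by gcongr
      _ = 3072 * Real.exp (-M/4) := by
        rw [show -M/4 = M/4 + -M/2 by ring, Real.exp_add]; ring
      _ ≤ _ := by
        gcongr
        linarith
  have hmain : ∀ s : ℝ, |s| = 1 → E p n (fun ω => if ∀ x, (cnt ω x : ℝ) ≤ M then 
      Real.exp (s * θ * ((S ω : ℝ)/2 - n * (n-1) / 2 * Q) - 36 * θ^2 * V) else 0) ≤ 1 := by
    intro s hs
    refine key hp hp1 n θ s hθ0.le hs hθ8 _ ?_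
    intro ω hω x k hk
    have hk1 : (k:ℝ) ≤ M := le_trans (by exact_mod_cast hk) (hω x)
    have hk2 : 2 * θ * k ≤ 1 := by rw [← hMθ]; gcongr
    have hk3 : 0 ≤ 2 * θ * k := by positivity
    have hab : |2 * s * θ * k| = 2 * θ * k := by
      rw [show 2 * s * θ * k = s * (2 * θ * k) by ring, abs_mul, hs, one_mul, abs_of_nonneg hk3]
    have h5 := (abs_le.1 (Real.abs_exp_sub_one_sub_id_le (x := 2 * s * θ * k) 
      (by rw [hab]; exact hk2))).2
    rw [← sq_abs, hab] at h5
    have h6 : min (2 * θ * k) ((2 * θ * k)^2) = (2 * θ * k)^2 := min_eq_right (by nlinarith)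
    rw [h6]; linarith
  have hpt : ∀ ω : Fin n → α, (if ε < |collEst n ω - Q| then (1:ℝ) else 0) ≤ 
      (if ∀ x, (cnt ω x : ℝ) ≤ M then 0 else 1) + (
      Real.exp (-(1/2304) * μ) * (if ∀ x, (cnt ω x : ℝ) ≤ M then 
        Real.exp (1 * θ * ((S ω : ℝ)/2 - n * (n-1) / 2 * Q) - 36 * θ^2 * V) else 0) + 
      Real.exp (-(1/2304) * μ) * (if ∀ x, (cnt ω x : ℝ) ≤ M then 
        Real.exp ((-1) * θ * ((S ω : ℝ)/2 - n * (n-1) / 2 * Q) - 36 * θ^2 * V) else 0)) := by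
    intro ω
    by_cases hg : ∀ x, (cnt ω x : ℝ) ≤ M
    swap
    · simp only [hg, if_false]
      split_ifs <;> norm_num
    simp only [hg, implies_true, if_true]
    split_ifs with hb
    swap
    · positivity
    have hN : 0 < (n:ℝ) * (n-1) := mul_pos (by linarith) (by linarith)
    have hc : collEst n ω = (S ω : ℝ) / (n * (n-1)) := rfl
    set D := (S ω : ℝ)/2 - n * (n-1) / 2 * Q with hD
    have hDe : D = (n * (n-1)) / 2 * (collEst n ω - Q) := by
      have hcs : (n * (n-1) : ℝ) * ((S ω : ℝ) / (n * (n-1))) = S ω := mul_div_cancel₀ _ hN.ne'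
      rw [hD, hc]
      linear_combination (-1/2) * hcs
    have hDa : n^2 * ε / 4 ≤ |D| := by
      rw [hDe, abs_mul, abs_of_pos (by positivity)]
      calc n^2 * ε / 4 ≤ (n * (n-1)) / 2 * ε := by
            have h8 : (n:ℝ) * 2 ≤ n * n := mul_le_mul_of_nonneg_left hn0 (by linarith)
            have h9 := mul_le_mul_of_nonneg_right h8 hε.le
            linarith
        _ ≤ _ := by gcongr
    have hθD : μ / 1152 ≤ θ * |D| := by
      have := mul_le_mul_of_nonneg_left hDa hθ0.le
      linarith
    have hfin : 0 ≤ -(1/2304) * μ + (θ * |D| - 36 * θ^2 * V) := by linarith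
    rw [← Real.exp_add, ← Real.exp_add]
    rcases abs_cases D with ⟨ha, _⟩ | ⟨ha, _⟩
    · rw [ha] at hfin
      have h5 := Real.one_le_exp hfin
      rw [one_mul]
      have h6 := Real.exp_pos (-(1/2304) * μ + (-1 * θ * D - 36 * θ^2 * V))
      linarith
    · rw [ha] at hfin
      have h5 := Real.one_le_exp hfin
      rw [show -1 * θ * D = θ * -D by ring]
      have h6 := Real.exp_pos (-(1/2304) * μ + (1 * θ * D - 36 * θ^2 * V))
      linarith
  refine (E_mono hp hpt).trans ?_
  rw [E_add, E_add, E_smul, E_smul]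
  have h5 := hmain 1 (by norm_num)
  have h6 := hmain (-1) (by norm_num)
  have h7 := Real.exp_pos (-(1/2304) * μ)
  nlinarith

end

end CollTail

open CollTail in
/-- Tails of the collision estimator (Theorem 1). -/
theorem collision_estimator_tails :
    ∃ C c : ℝ, 0 < C ∧ 0 < c ∧
      ∀ (α : Type) [Fintype α] [DecidableEq α] [MeasurableSpace α] [MeasurableSingletonClass α]
        (p : α → ℝ), (∀ x, 0 ≤ p x) → (∑ x, p x = 1) →
      ∀ (μ : Measure α) [IsProbabilityMeasure μ], (∀ x, μ {x} = ENNReal.ofReal (p x)) →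
      ∀ (n : ℕ), 2 ≤ n → ∀ ε : ℝ, 0 < ε →
        (Measure.pi fun _ : Fin n => μ)
            {ω : Fin n → α | ε < |collEst n ω - ∑ x, (p x) ^ 2|}
          ≤ ENNReal.ofReal (C * Real.exp (-c *
              min (ε ^ 2 / ((∑ x, (p x) ^ 2) / (n : ℝ) ^ 2 + (∑ x, (p x) ^ 3) / (n : ℝ)))
                (min (ε / ((⨆ x, p x) / (n : ℝ))) ((n : ℝ) * Real.sqrt ε)))) := by
  refine ⟨3074, 1/2304, by norm_num, by norm_num, ?_⟩
  intro α _ _ _ _ p hp hp1 μ _ hμ n hn ε hε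
  have hn0 : (2:ℝ) ≤ n := by exact_mod_cast hn
  have hnp : (0:ℝ) < n := by linarith
  have hpm : ∀ x, p x ≤ ⨆ x, p x := fun x => le_ciSup (Set.finite_range p).bddAbove x
  obtain ⟨x0, hx0⟩ : ∃ x, 0 < p x := by
    by_contra hcon
    push Not at hcon
    have := Finset.sum_nonpos (s := Finset.univ) (fun x _ => hcon x)
    linarith
  have hpm0 : 0 < ⨆ x, p x := hx0.trans_le (hpm x0)
  have hQ0 : 0 < ∑ x, p x ^ 2 := 
    Finset.sum_pos' (fun x _ => pow_nonneg (hp x) 2) ⟨x0, Finset.mem_univ _, by positivity⟩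
  have hP0 : 0 < ∑ x, p x ^ 3 := 
    Finset.sum_pos' (fun x _ => pow_nonneg (hp x) 3) ⟨x0, Finset.mem_univ _, by positivity⟩
  set m := min (ε ^ 2 / ((∑ x, (p x) ^ 2) / (n : ℝ) ^ 2 + (∑ x, (p x) ^ 3) / (n : ℝ)))
                (min (ε / ((⨆ x, p x) / (n : ℝ))) ((n : ℝ) * Real.sqrt ε)) with hm
  have hm0 : 0 < m := by
    have := Real.sqrt_pos.2 hε
    rw [hm]
    refine lt_min (by positivity) (lt_min (by positivity) (by positivity))
  have hm1 : m ≤ ε ^ 2 / ((∑ x, (p x) ^ 2) / (n : ℝ) ^ 2 + (∑ x, (p x) ^ 3) / (n : ℝ)) := 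
    min_le_left _ _
  have hm2 : m ≤ ε / ((⨆ x, p x) / (n : ℝ)) := (min_le_right _ _).trans (min_le_left _ _)
  have hm3 : m ≤ (n : ℝ) * Real.sqrt ε := (min_le_right _ _).trans (min_le_right _ _)
  have hreal := real_tail hp hp1 n hn ε (⨆ x, p x) m hε hpm hpm0 hm0 (by
      rw [le_div_iff₀ (by positivity)] at hm1
      have := mul_le_mul_of_nonneg_left hm1 (by positivity : (0:ℝ) ≤ n^4)
      refine le_trans (le_of_eq ?_) this
      field_simp) (by
      rw [le_div_iff₀ (by positivity)] at hm2
      have := mul_le_mul_of_nonneg_left hm2 hnp.le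
      refine le_trans (le_of_eq ?_) this
      field_simp) hm3
  refine le_trans (le_of_eq ?_) (ENNReal.ofReal_le_ofReal hreal)
  set s := {ω : Fin n → α | ε < |collEst n ω - ∑ x, (p x) ^ 2|} with hs
  have hw : ∀ ω : Fin n → α, 0 ≤ ∏ i, p (ω i) := fun ω => Finset.prod_nonneg fun i _ => hp _
  unfold E
  rw [ENNReal.ofReal_sum_of_nonneg (fun ω _ => mul_nonneg (hw ω) (by split_ifs <;> norm_num))]
  classical
  have hsf : s = ((Finset.univ.filter (fun ω => ε < |collEst n ω - ∑ x, (p x) ^ 2|) : 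
      Finset (Fin n → α)) : Set (Fin n → α)) := by
    ext ω; simp [hs]
  rw [hsf, ← MeasureTheory.sum_measure_singleton, Finset.sum_filter]
  refine Finset.sum_congr rfl fun ω _ => ?_
  split_ifs
  · rw [Measure.pi_singleton, mul_one, ENNReal.ofReal_prod_of_nonneg (fun i _ => hp _)]
    simp only [hμ]
  · simp
end

section
/- There exist universal constants C, c > 0 such that for every finite type α, every probability mass function p on α, every integer n ≥ 2, and every ε with 0 < ε < 1, P[|Q̃ − Q| > ε·Q] ≤ C · exp(−c · n · ε² · √Q). -/
open MeasureTheory ProbabilityTheory Finset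

lemma wpos {Ω : Type} [Fintype Ω] (w : Ω → ℝ) (hw : ∀ o, 0 ≤ w o) (h1 : ∑ o, w o = 1)
    (Z : Ω → ℝ) (hZ : ∀ o, 0 < Z o) : 0 < ∑ o, w o * Z o := by
  by_contra hcon
  have h0 : ∀ o ∈ (univ : Finset Ω), 0 ≤ w o * Z o := fun o _ => mul_nonneg (hw o) (hZ o).le
  have h2 : ∑ o, w o * Z o = 0 := le_antisymm (not_lt.mp hcon) (sum_nonneg h0)
  rw [sum_eq_zero_iff_of_nonneg h0] at h2
  have : ∑ o, w o = 0 := sum_eq_zero fun o ho => by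
    rcases mul_eq_zero.mp (h2 o ho) with h | h
    · exact h
    · exact absurd h (hZ o).ne'
  linarith

lemma one_pt {a b : ℝ} (ha : 0 < a) (hb : 0 < b) : a - b ≤ a * (Real.log a - Real.log b) := by
  have h := Real.log_le_sub_one_of_pos (div_pos hb ha)
  rw [Real.log_div hb.ne' ha.ne'] at h
  have h2 := mul_le_mul_of_nonneg_left h ha.le
  have : a * (b / a - 1) = b - a := by field_simp
  nlinarith

lemma logsum {Ω : Type} [Fintype Ω] (w : Ω → ℝ) (hw : ∀ o, 0 ≤ w o) (h1 : ∑ o, w o = 1)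
    (Z u : Ω → ℝ) (hZ : ∀ o, 0 < Z o) (hu : ∀ o, 0 < u o) :
    (∑ o, w o * Z o) * (Real.log (∑ o, w o * Z o) - Real.log (∑ o, w o * u o)) ≤
      ∑ o, w o * (Z o * (Real.log (Z o) - Real.log (u o))) := by
  have hW := wpos w hw h1 Z hZ
  have hU := wpos w hw h1 u hu
  set W := ∑ o, w o * Z o with hWd
  set U := ∑ o, w o * u o with hUd
  have key : ∀ o, w o * (Z o * (Real.log W - Real.log U) + (Z o - u o * (W / U))) ≤
      w o * (Z o * (Real.log (Z o) - Real.log (u o))) := by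
    intro o
    apply mul_le_mul_of_nonneg_left _ (hw o)
    have h := one_pt (hZ o) (mul_pos (hu o) (div_pos hW hU))
    rw [Real.log_mul (hu o).ne' (div_pos hW hU).ne', Real.log_div hW.ne' hU.ne'] at h
    linarith
  have hs := sum_le_sum (s := univ) fun o _ => key o
  refine le_trans (le_of_eq ?_) hs
  have e : ∀ o, w o * (Z o * (Real.log W - Real.log U) + (Z o - u o * (W / U))) =
     (w o * Z o) * (Real.log W - Real.log U) + w o * Z o - (w o * u o) * (W / U) := fun o => by ring
  simp_rw [e]
  rw [sum_sub_distrib, sum_add_distrib, ← sum_mul, ← sum_mul, ← hWd, ← hUd]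
  field_simp
  ring

noncomputable def cE {α : Type} [Fintype α] (p : α → ℝ) (n : ℕ) (g : (Fin n → α) → ℝ) : ℝ :=
  ∑ ω, (∏ i, p (ω i)) * g ω

section
variable {α : Type} [Fintype α] (p : α → ℝ)

lemma cE_succ (n : ℕ) (g : (Fin (n+1) → α) → ℝ) :
    cE p (n+1) g = ∑ x, p x * cE p n (fun ω => g (Fin.cons x ω)) := by
  unfold cE
  rw [← (Fin.consEquiv (fun _ : Fin (n+1) => α)).sum_comp, Fintype.sum_prod_type]
  refine sum_congr rfl fun x _ => ?_
  rw [mul_sum]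
  refine sum_congr rfl fun ω _ => ?_
  simp [Fin.consEquiv, Fin.prod_univ_succ, mul_assoc]

lemma cE_prod (n : ℕ) (g : Fin n → α → ℝ) :
    cE p n (fun ω => ∏ i, g i (ω i)) = ∏ i, ∑ x, p x * g i x := by
  unfold cE
  rw [Finset.prod_univ_sum]
  simp [prod_mul_distrib]

lemma wsum (hs : ∑ x, p x = 1) (n : ℕ) : ∑ ω : Fin n → α, ∏ i, p (ω i) = 1 := by
  have := cE_prod p n (fun _ _ => 1)
  simpa [cE, hs] using this

lemma ent_tensor (hp : ∀ x, 0 ≤ p x) (hs : ∑ x, p x = 1) : ∀ (n : ℕ) (Z : (Fin n → α) → ℝ)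
    (u : Fin n → (Fin n → α) → ℝ), (∀ ω, 0 < Z ω) → (∀ i ω, 0 < u i ω) →
    (∀ i ω y, u i (Function.update ω i y) = u i ω) →
    cE p n (fun ω => Z ω * Real.log (Z ω)) - cE p n Z * Real.log (cE p n Z) ≤
      ∑ i, cE p n (fun ω => Z ω * (Real.log (Z ω) - Real.log (u i ω)) - Z ω + u i ω) := by
  intro n
  induction n with
  | zero => intro Z u hZ hu hd; simp [cE]
  | succ n ih =>
    intro Z u hZ hu hd
    have hwn : ∀ ω : Fin n → α, 0 ≤ ∏ i, p (ω i) := fun ω => prod_nonneg fun i _ => hp _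
    obtain ⟨x0⟩ : Nonempty α := by
      by_contra h
      rw [not_nonempty_iff] at h
      simp at hs
    have hu0 : ∀ x ω, u 0 (Fin.cons x ω) = u 0 (Fin.cons x0 ω) := by
      intro x ω
      have := hd 0 (Fin.cons x0 ω) x
      rwa [Fin.update_cons_zero] at this
    set W : α → ℝ := fun x => cE p n (fun ω => Z (Fin.cons x ω)) with hW
    set U : ℝ := cE p n (fun ω => u 0 (Fin.cons x0 ω)) with hU
    have hWp : ∀ x, 0 < W x := fun x => wpos _ hwn (wsum p hs n) _ (fun ω => hZ _)
    have hUp : 0 < U := wpos _ hwn (wsum p hs n) _ (fun ω => hu _ _)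
    have hI : ∀ x, cE p n (fun ω => Z (Fin.cons x ω) * Real.log (Z (Fin.cons x ω)))
        ≤ W x * Real.log (W x) + ∑ i : Fin n, cE p n (fun ω => Z (Fin.cons x ω) *
          (Real.log (Z (Fin.cons x ω)) - Real.log (u i.succ (Fin.cons x ω))) - Z (Fin.cons x ω)
            + u i.succ (Fin.cons x ω)) := by
      intro x
      have := ih (fun ω => Z (Fin.cons x ω)) (fun i ω => u i.succ (Fin.cons x ω))
        (fun ω => hZ _) (fun i ω => hu _ _) (fun i ω y => by
          have := hd i.succ (Fin.cons x ω) y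
          rwa [← Fin.cons_update] at this)
      linarith
    have hL : ∀ x, W x * (Real.log (W x) - Real.log U) - W x + U ≤
        cE p n (fun ω => Z (Fin.cons x ω) * (Real.log (Z (Fin.cons x ω)) -
          Real.log (u 0 (Fin.cons x ω))) - Z (Fin.cons x ω) + u 0 (Fin.cons x ω)) := by
      intro x
      have h := logsum (fun ω : Fin n → α => ∏ i, p (ω i)) hwn (wsum p hs n)
        (fun ω => Z (Fin.cons x ω)) (fun ω => u 0 (Fin.cons x0 ω)) (fun ω => hZ _) (fun ω => hu _ _)
      simp only [hu0 x]
      have e : cE p n (fun ω => Z (Fin.cons x ω) * (Real.log (Z (Fin.cons x ω)) -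
          Real.log (u 0 (Fin.cons x0 ω))) - Z (Fin.cons x ω) + u 0 (Fin.cons x0 ω)) =
          (∑ ω : Fin n → α, (∏ i, p (ω i)) * (Z (Fin.cons x ω) * (Real.log (Z (Fin.cons x ω)) -
          Real.log (u 0 (Fin.cons x0 ω))))) - W x + U := by
        simp only [hW, hU, cE, mul_add, mul_sub, sum_add_distrib, sum_sub_distrib]
      rw [e]
      have h' : W x * (Real.log (W x) - Real.log U) ≤ _ := h
      linarith
    rw [Fin.sum_univ_succ]
    simp only [cE_succ]
    have hWb : 0 < ∑ x, p x * W x := wpos p hp hs W hWp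
    have h1 := one_pt hWb hUp
    have h2 : ∑ x, p x * cE p n (fun ω => Z (Fin.cons x ω) * Real.log (Z (Fin.cons x ω))) ≤ _ :=
      sum_le_sum (s := univ) fun x _ => mul_le_mul_of_nonneg_left (hI x) (hp x)
    have h3 := sum_le_sum (s := univ) fun x _ => mul_le_mul_of_nonneg_left (hL x) (hp x)
    simp only [mul_add, sum_add_distrib] at h2
    have e3 : ∑ x, p x * (W x * (Real.log (W x) - Real.log U) - W x + U) =
        ∑ x, p x * (W x * Real.log (W x)) - (∑ x, p x * W x) * Real.log U - ∑ x, p x * W x + U := by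
      simp only [mul_add, mul_sub, sum_add_distrib, sum_sub_distrib, ← sum_mul, hs, ← mul_assoc]
      ring
    rw [e3] at h3
    have e4 : ∀ (G : α → Fin n → ℝ), ∑ x, p x * ∑ i, G x i = ∑ i, ∑ x, p x * G x i := by
      intro G
      simp only [mul_sum]
      exact sum_comm
    rw [e4] at h2
    change _ - (∑ x, p x * W x) * Real.log (∑ x, p x * W x) ≤ _
    linarith
end

lemma ode {Ω : Type} [Fintype Ω] (w : Ω → ℝ) (hw : ∀ o, 0 ≤ w o) (h1 : ∑ o, w o = 1)
    (f : Ω → ℝ) (H : ∀ l : ℝ, |l| ≤ 1 →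
      (∑ o, w o * (Real.exp (l * f o) * (l * f o))) -
        (∑ o, w o * Real.exp (l * f o)) * Real.log (∑ o, w o * Real.exp (l * f o)) ≤
      2 * l^2 * ∑ o, w o * (Real.exp (l * f o) * f o)) (l : ℝ) (hl : |l| ≤ 1/4) :
    ∑ o, w o * Real.exp (l * f o) ≤ Real.exp (l * (∑ o, w o * f o) / (1 - 2 * l)) := by
  set M : ℝ → ℝ := fun l => ∑ o, w o * Real.exp (l * f o) with hM
  set M' : ℝ → ℝ := fun l => ∑ o, w o * (Real.exp (l * f o) * f o) with hM'
  have hMp : ∀ l, 0 < M l := fun l => wpos w hw h1 _ (fun o => Real.exp_pos _)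
  have hMd : ∀ l, HasDerivAt M (M' l) l := by
    intro l
    apply HasDerivAt.fun_sum
    intro o _
    have h := (((hasDerivAt_id l).mul_const (f o)).exp).const_mul (w o)
    simpa using h
  set F : ℝ → ℝ := fun l => Real.log (M l) with hF
  have hFd : ∀ l, HasDerivAt F (M' l / M l) l := fun l => (hMd l).log (hMp l).ne'
  have hM0 : M 0 = 1 := by simp [hM, h1]
  have hF0 : F 0 = 0 := by simp [hF, hM0]
  have hv : M' 0 = ∑ o, w o * f o := by simp [hM']
  set G : ℝ → ℝ := fun l => dslope F 0 l - 2 * F l with hG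
  have hGc : Continuous G := by
    apply Continuous.sub
    · rw [continuous_iff_continuousAt]
      intro x
      by_cases hx : x = 0
      · subst hx
        exact continuousAt_dslope_same.2 (hFd 0).differentiableAt
      · exact (continuousAt_dslope_of_ne hx).2 (hFd x).continuousAt
    · exact continuous_const.mul (continuous_iff_continuousAt.2 fun x => (hFd x).continuousAt)
  have hG0 : G 0 = ∑ o, w o * f o := by
    simp [hG, hF0, (hFd 0).deriv, hM0, hv]
  have hGne : ∀ x, x ≠ 0 → G x = F x / x - 2 * F x := by
    intro x hx
    simp [hG, dslope_of_ne _ hx, slope_def_field, hF0]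
  have hGd : ∀ x, x ≠ 0 → HasDerivAt G ((M' x / M x * x - F x) / x^2 - 2 * (M' x / M x)) x := by
    intro x hx
    have h := ((hFd x).div (hasDerivAt_id x) hx).sub ((hFd x).const_mul 2)
    have h' : HasDerivAt (fun y => F y / y - 2 * F y)
      ((M' x / M x * x - F x) / x^2 - 2 * (M' x / M x)) x := by
      refine HasDerivAt.congr_deriv h ?_
      simp
    refine h'.congr_of_eventuallyEq ?_
    filter_upwards [isOpen_ne.mem_nhds hx] with y hy using hGne y hy
  have hGn : ∀ x, x ≠ 0 → |x| ≤ 1 → (M' x / M x * x - F x) / x^2 - 2 * (M' x / M x) ≤ 0 := by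
    intro x hx hx1
    have h := H x hx1
    have e : (∑ o, w o * (Real.exp (x * f o) * (x * f o))) = x * M' x := by
      simp only [hM', mul_sum]
      exact sum_congr rfl fun o _ => by ring
    rw [e] at h
    change x * M' x - M x * F x ≤ 2 * x^2 * M' x at h
    have hx2 : 0 < x^2 := by positivity
    have hm := hMp x
    rw [sub_nonpos, div_le_iff₀ hx2, ← sub_nonneg]
    have : 2 * (M' x / M x) * x^2 - (M' x / M x * x - F x) =
      (2 * x^2 * M' x - (x * M' x - M x * F x)) / M x := by
      field_simp
    rw [this]
    apply div_nonneg _ hm.le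
    linarith
  have hl' := abs_le.mp hl
  have hpos : 0 < 1 - 2 * l := by linarith
  rw [← Real.log_le_iff_le_exp (hMp l)]
  change F l ≤ _
  rw [le_div_iff₀ hpos, ← hG0]
  rcases lt_trichotomy l 0 with h | h | h
  · have ha : AntitoneOn G (Set.Icc (-1) 0) := by
      apply antitoneOn_of_deriv_nonpos (convex_Icc _ _) hGc.continuousOn
      · intro x hx
        rw [interior_Icc] at hx
        exact (hGd x hx.2.ne).differentiableAt.differentiableWithinAt
      · intro x hx
        rw [interior_Icc] at hx
        rw [(hGd x hx.2.ne).deriv]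
        exact hGn x hx.2.ne (abs_le.2 ⟨hx.1.le, by linarith [hx.2]⟩)
    have := ha ⟨by linarith, h.le⟩ ⟨by norm_num, le_refl _⟩ h.le
    have h2 := mul_le_mul_of_nonpos_left this h.le
    rw [hGne l h.ne] at h2
    have e : l * (F l / l - 2 * F l) = F l * (1 - 2 * l) := by
      have : l ≠ 0 := by grind
      field_simp
    linarith
  · subst h; simp [hF0]
  · have ha : AntitoneOn G (Set.Icc 0 1) := by
      apply antitoneOn_of_deriv_nonpos (convex_Icc _ _) hGc.continuousOn
      · intro x hx
        rw [interior_Icc] at hx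
        exact (hGd x hx.1.ne').differentiableAt.differentiableWithinAt
      · intro x hx
        rw [interior_Icc] at hx
        rw [(hGd x hx.1.ne').deriv]
        exact hGn x hx.1.ne' (abs_le.2 ⟨by linarith [hx.1], hx.2.le⟩)
    have := ha ⟨le_refl _, by norm_num⟩ ⟨h.le, by linarith⟩ h.le
    have h2 := mul_le_mul_of_nonneg_left this h.le
    rw [hGne l h.ne'] at h2
    have e : l * (F l / l - 2 * F l) = F l * (1 - 2 * l) := by
      have : l ≠ 0 := by grind
      field_simp
    linarith

section
variable {α : Type} [Fintype α] (p : α → ℝ)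

lemma cE_mono (hp : ∀ x, 0 ≤ p x) (n : ℕ) {g h : (Fin n → α) → ℝ} (H : ∀ ω, g ω ≤ h ω) :
    cE p n g ≤ cE p n h :=
  sum_le_sum fun ω _ => mul_le_mul_of_nonneg_left (H ω) (prod_nonneg fun i _ => hp _)

lemma cE_sum {ι : Type} (s : Finset ι) (n : ℕ) (g : ι → (Fin n → α) → ℝ) :
    cE p n (fun ω => ∑ i ∈ s, g i ω) = ∑ i ∈ s, cE p n (g i) := by
  simp only [cE, mul_sum]
  exact sum_comm

lemma cE_mul_left (n : ℕ) (c : ℝ) (g : (Fin n → α) → ℝ) :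
    cE p n (fun ω => c * g ω) = c * cE p n g := by
  simp only [cE, mul_sum]
  exact sum_congr rfl fun _ _ => by ring

lemma cE_add (n : ℕ) (g h : (Fin n → α) → ℝ) :
    cE p n (fun ω => g ω + h ω) = cE p n g + cE p n h := by
  simp only [cE, mul_add, sum_add_distrib]

lemma conc_mgf (hp : ∀ x, 0 ≤ p x) (hs : ∑ x, p x = 1) (n : ℕ) (f : (Fin n → α) → ℝ)
    (fi : Fin n → (Fin n → α) → ℝ) (hd : ∀ i ω y, fi i (Function.update ω i y) = fi i ω)
    (h0 : ∀ i ω, 0 ≤ f ω - fi i ω) (h1 : ∀ i ω, f ω - fi i ω ≤ 1)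
    (h2 : ∀ ω, ∑ i, (f ω - fi i ω) ≤ 2 * f ω) (l : ℝ) (hl : |l| ≤ 1/4) :
    cE p n (fun ω => Real.exp (l * f ω)) ≤ Real.exp (l * cE p n f / (1 - 2 * l)) := by
  refine ode (fun ω : Fin n → α => ∏ i, p (ω i)) (fun ω => prod_nonneg fun i _ => hp _)
    (wsum p hs n) f ?_ l hl
  intro l hl
  have h := ent_tensor p hp hs n (fun ω => Real.exp (l * f ω)) (fun i ω => Real.exp (l * fi i ω))
    (fun _ => Real.exp_pos _) (fun _ _ => Real.exp_pos _) (fun i ω y => by rw [hd])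
  simp only [Real.log_exp] at h
  refine le_trans h ?_
  rw [← cE_sum]
  change _ ≤ 2 * l^2 * cE p n (fun ω => Real.exp (l * f ω) * f ω)
  rw [← cE_mul_left]
  apply cE_mono p hp
  intro ω
  have key : ∀ i, Real.exp (l * f ω) * (l * f ω - l * fi i ω) - Real.exp (l * f ω)
      + Real.exp (l * fi i ω) ≤ Real.exp (l * f ω) * l^2 * (f ω - fi i ω) := by
    intro i
    have a0 := h0 i ω
    have a1 := h1 i ω
    set d := f ω - fi i ω with hdd
    have e : Real.exp (l * fi i ω) = Real.exp (l * f ω) * Real.exp (-(l * d)) := by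
      rw [← Real.exp_add]; congr 1; rw [hdd]; ring
    have hb : |-(l * d)| ≤ 1 := by
      rw [abs_neg, abs_mul, abs_of_nonneg a0]
      exact mul_le_one₀ hl a0 a1
    have hq := (abs_le.mp (Real.abs_exp_sub_one_sub_id_le hb)).2
    rw [e]
    have hq2 : l * d - 1 + Real.exp (-(l*d)) ≤ l^2 * d := by
      nlinarith [mul_nonneg (sq_nonneg l) (mul_nonneg a0 (sub_nonneg.2 a1))]
    have := mul_le_mul_of_nonneg_left hq2 (Real.exp_pos (l * f ω)).le
    have e2 : l * f ω - l * fi i ω = l * d := by rw [hdd]; ring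
    rw [e2]
    linarith
  refine le_trans (sum_le_sum fun i _ => key i) ?_
  rw [← mul_sum]
  have := mul_le_mul_of_nonneg_left (h2 ω) (mul_nonneg (Real.exp_pos (l * f ω)).le (sq_nonneg l))
  linarith

variable [DecidableEq α]

/-- Number of indices in A whose sample equals x. -/
def cnt {n : ℕ} (A : Finset (Fin n)) (x : α) (ω : Fin n → α) : ℕ := (A.filter fun i => ω i = x).card

lemma offDiag_filter {n : ℕ} (x : α) (ω : Fin n → α) :
    ((univ : Finset (Fin n)).offDiag.filter fun ij => ω ij.1 = x ∧ ω ij.2 = x) =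
      (univ.filter fun i => ω i = x).offDiag := by
  ext ⟨i, j⟩
  simp
  tauto

lemma offDiag_cnt {n : ℕ} (x : α) (ω : Fin n → α) :
    (((univ.filter fun i => ω i = x).offDiag).card : ℝ) =
      (cnt univ x ω : ℝ) * ((cnt univ x ω : ℝ) - 1) := by
  rw [offDiag_card, ← cnt, Nat.cast_sub (Nat.le_mul_self _)]
  push_cast
  ring

lemma coll_eq {n : ℕ} (ω : Fin n → α) :
    ((Finset.univ.filter fun ij : Fin n × Fin n => ij.1 ≠ ij.2 ∧ ω ij.1 = ω ij.2).card : ℝ) =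
      ∑ x, (cnt univ x ω : ℝ) * ((cnt univ x ω : ℝ) - 1) := by
  rw [card_eq_sum_card_fiberwise (f := fun ij : Fin n × Fin n => ω ij.1) (t := univ)
    (fun _ _ => by simp)]
  push_cast
  refine sum_congr rfl fun x _ => ?_
  rw [← offDiag_cnt]
  congr 2
  ext ⟨i, j⟩
  simp
  constructor
  · rintro ⟨⟨a, b⟩, c⟩
    exact ⟨c, b ▸ c, a⟩
  · rintro ⟨a, b, c⟩
    exact ⟨⟨c, a.trans b.symm⟩, a⟩

lemma moment_pt {n : ℕ} (x : α) (z : ℝ) (ω : Fin n → α) :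
    (cnt univ x ω : ℝ) * ((cnt univ x ω : ℝ) - 1) * z ^ (cnt univ x ω) =
      ∑ ij ∈ (univ : Finset (Fin n)).offDiag, ∏ k,
        (if ω k = x then z else (if k = ij.1 ∨ k = ij.2 then 0 else 1)) := by
  have : ∀ ij : Fin n × Fin n, ∏ k,
        (if ω k = x then z else (if k = ij.1 ∨ k = ij.2 then 0 else 1)) =
        if ω ij.1 = x ∧ ω ij.2 = x then z ^ (cnt univ x ω) else 0 := by
    intro ij
    split_ifs with h
    · rw [cnt, ← prod_const, prod_filter]
      refine prod_congr rfl fun k _ => ?_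
      split_ifs with h1 h2
      · rfl
      · rcases h2 with rfl | rfl
        · exact absurd h.1 h1
        · exact absurd h.2 h1
      · rfl
    · rw [not_and_or] at h
      rcases h with h | h
      · exact prod_eq_zero (mem_univ ij.1) (by simp [h])
      · exact prod_eq_zero (mem_univ ij.2) (by simp [h])
  simp_rw [this]
  rw [← sum_filter, offDiag_filter, sum_const, nsmul_eq_mul, offDiag_cnt]

lemma moment (hs : ∑ x, p x = 1) (n : ℕ) (x : α) (z : ℝ) :
    cE p n (fun ω => (cnt univ x ω : ℝ) * ((cnt univ x ω : ℝ) - 1) * z ^ (cnt univ x ω)) =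
      (n : ℝ) * ((n : ℝ) - 1) * ((p x * z)^2 * (1 + p x * (z - 1))^(n-2)) := by
  simp_rw [moment_pt]
  rw [cE_sum]
  have hterm : ∀ ij ∈ (univ : Finset (Fin n)).offDiag,
      cE p n (fun ω => ∏ k, (if ω k = x then z else (if k = ij.1 ∨ k = ij.2 then 0 else 1))) =
      (p x * z)^2 * (1 + p x * (z - 1))^(n-2) := by
    rintro ⟨i, j⟩ hij
    have hne : i ≠ j := by simpa using hij
    rw [cE_prod p n (fun k y => if y = x then z else (if k = i ∨ k = j then 0 else 1))]
    have e : ∀ k : Fin n, ∑ y, p y * (if y = x then z else (if k = i ∨ k = j then 0 else 1)) =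
        if k ∈ ({i, j} : Finset (Fin n)) then p x * z else 1 + p x * (z - 1) := by
      intro k
      simp only [mem_insert, mem_singleton]
      split_ifs with h
      · simp
      · have : ∀ y, p y * (if y = x then z else 1) = p y + if y = x then p y * (z - 1) else 0 := by
          intro y; split_ifs <;> ring
        simp_rw [this, sum_add_distrib, hs]
        simp
    simp_rw [e]
    rw [prod_ite, prod_const, prod_const]
    have c1 : (univ.filter fun k => k ∈ ({i, j} : Finset (Fin n))) = {i, j} := by ext; simp
    have c2 : (univ.filter fun k => k ∉ ({i, j} : Finset (Fin n))) = ({i, j} : Finset (Fin n))ᶜ := by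
      ext; simp
    rw [c1, c2, card_compl, card_pair hne, Fintype.card_fin]
  rw [sum_congr rfl hterm, sum_const, nsmul_eq_mul, offDiag_card, card_univ, Fintype.card_fin,
    Nat.cast_sub (Nat.le_mul_self _)]
  push_cast
  ring

/-- Truncated increments. -/
noncomputable def aK (K : ℝ) (j : ℕ) : ℝ := min ((j : ℝ) / K) 1

/-- Truncated quadratic. -/
noncomputable def gK (K : ℝ) (s : ℕ) : ℝ := ∑ j ∈ range s, aK K j

lemma gK_self {K : ℝ} (hK : 0 < K) (s : ℕ) : ((s : ℝ) + 1) * aK K s ≤ 2 * gK K (s + 1) := by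
  induction s with
  | zero => simp [aK, gK]
  | succ s ih =>
    rw [gK, sum_range_succ, ← gK]
    have : (s : ℝ) * aK K (s+1) ≤ ((s:ℝ) + 1) * aK K s := by
      unfold aK
      push_cast
      rw [mul_min_of_nonneg _ _ (by positivity), mul_min_of_nonneg _ _ (by positivity)]
      apply min_le_min
      · apply le_of_eq; ring
      · linarith
    push_cast
    linarith

lemma gK_le {K : ℝ} (hK : 0 < K) (s : ℕ) : 2 * K * gK K s ≤ (s : ℝ) * ((s : ℝ) - 1) := by
  induction s with
  | zero => simp [gK]
  | succ s ih =>
    rw [gK, sum_range_succ, ← gK]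
    have : aK K s ≤ s / K := min_le_left _ _
    rw [le_div_iff₀ hK] at this
    push_cast
    linarith

lemma gK_eq {K : ℝ} (hK : 0 < K) (s : ℕ) (h : (s : ℝ) - 1 ≤ K) :
    2 * K * gK K s = (s : ℝ) * ((s : ℝ) - 1) := by
  induction s with
  | zero => simp [gK]
  | succ s ih =>
    push_cast at h
    rw [gK, sum_range_succ, ← gK]
    have : aK K s = s / K := min_eq_left ((div_le_one hK).2 (by linarith))
    rw [mul_add, ih (by linarith), this]
    push_cast
    field_simp
    ring

/-- Truncated statistic on index set A. -/
noncomputable def fK (K : ℝ) {n : ℕ} (A : Finset (Fin n)) (ω : Fin n → α) : ℝ :=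
  ∑ x, gK K (cnt A x ω)

lemma fK_update (K : ℝ) {n : ℕ} (i : Fin n) (ω : Fin n → α) (y : α) :
    fK K (univ.erase i) (Function.update ω i y) = fK K (univ.erase i) ω := by
  unfold fK cnt
  refine sum_congr rfl fun x _ => ?_
  congr 2
  apply filter_congr
  intro j hj
  rw [Function.update_of_ne (ne_of_mem_erase hj)]

lemma fK_sub (K : ℝ) {n : ℕ} (i : Fin n) (ω : Fin n → α) :
    fK K univ ω - fK K (univ.erase i) ω =
      ∑ x, if ω i = x then aK K (cnt univ x ω - 1) else 0 := by
  unfold fK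
  rw [← sum_sub_distrib]
  refine sum_congr rfl fun x _ => ?_
  have hc : cnt (univ.erase i) x ω = ((univ.filter fun j => ω j = x).erase i).card := by
    rw [cnt, filter_erase]
  split_ifs with h
  · have hm : i ∈ univ.filter fun j => ω j = x := by simp [h]
    have hp : 0 < cnt univ x ω := card_pos.2 ⟨i, hm⟩
    rw [card_erase_of_mem hm, ← cnt] at hc
    rw [hc]
    obtain ⟨s, hs⟩ := Nat.exists_eq_succ_of_ne_zero hp.ne'
    rw [hs]
    simp [gK, sum_range_succ]
  · have hm : i ∉ univ.filter fun j => ω j = x := by simp [h]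
    rw [erase_eq_of_notMem hm, ← cnt] at hc
    rw [hc, sub_self]

lemma fK_mgf (hp : ∀ x, 0 ≤ p x) (hs : ∑ x, p x = 1) (n : ℕ) {K : ℝ} (hK : 0 < K)
    (l : ℝ) (hl : |l| ≤ 1/4) :
    cE p n (fun ω => Real.exp (l * fK K univ ω)) ≤
      Real.exp (l * cE p n (fK K univ) / (1 - 2 * l)) := by
  have ha0 : ∀ j, 0 ≤ aK K j := fun j => le_min (by positivity) zero_le_one
  have ha1 : ∀ j, aK K j ≤ 1 := fun j => min_le_right _ _
  refine conc_mgf p hp hs n _ (fun i => fK K (univ.erase i)) (fun i ω y => fK_update K i ω y)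
    ?_ ?_ ?_ l hl
  · intro i ω
    rw [fK_sub]
    simpa using ha0 _
  · intro i ω
    rw [fK_sub]
    simpa using ha1 _
  · intro ω
    simp_rw [fK_sub]
    rw [sum_comm, fK, mul_sum]
    refine sum_le_sum fun x _ => ?_
    rw [← sum_filter, sum_const, nsmul_eq_mul, ← cnt]
    rcases Nat.eq_zero_or_pos (cnt univ x ω) with h | h
    · simp [h, gK]
    · obtain ⟨s, hs⟩ := Nat.exists_eq_succ_of_ne_zero h.ne'
      rw [hs]
      simpa using gK_self hK s

end

section
variable {α : Type} [Fintype α] [DecidableEq α] (p : α → ℝ)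

lemma chern_up (hp : ∀ x, 0 ≤ p x) (hs : ∑ x, p x = 1) (n : ℕ) {K : ℝ} (hK : 0 < K)
    {ε v : ℝ} (h0 : 0 < ε) (h1 : ε < 1) (hv : cE p n (fK K univ) = v) (hv0 : 0 ≤ v) :
    cE p n (fun ω => Real.exp (ε / 8 * (fK K univ ω - (1 + ε) * v))) ≤
      Real.exp (-(ε^2 * v / 32)) := by
  have h := fK_mgf p hp hs n hK (ε / 8) (by rw [abs_of_pos] <;> linarith)
  have e : ∀ ω : Fin n → α, Real.exp (ε / 8 * (fK K univ ω - (1 + ε) * v)) =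
      Real.exp (-(ε / 8 * ((1 + ε) * v))) * Real.exp (ε / 8 * fK K univ ω) := by
    intro ω; rw [← Real.exp_add]; congr 1; ring
  simp_rw [e]
  rw [cE_mul_left]
  refine le_trans (mul_le_mul_of_nonneg_left h (Real.exp_pos _).le) ?_
  rw [← Real.exp_add, hv]
  apply Real.exp_le_exp.2
  have : ε / 8 * v / (1 - 2 * (ε / 8)) ≤ ε / 8 * v * (1 + ε / 2) := by
    rw [div_le_iff₀ (by linarith)]
    have : 0 ≤ ε / 8 * v := by positivity
    have h2 : 1 ≤ (1 + ε / 2) * (1 - 2 * (ε / 8)) := by nlinarith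
    nlinarith [mul_le_mul_of_nonneg_left h2 this]
  nlinarith [mul_nonneg (sq_nonneg ε) hv0]

lemma chern_low (hp : ∀ x, 0 ≤ p x) (hs : ∑ x, p x = 1) (n : ℕ) {K : ℝ} (hK : 0 < K)
    {ε v : ℝ} (h0 : 0 < ε) (h1 : ε < 1) (hv : cE p n (fK K univ) = v) (hv0 : 0 ≤ v) :
    cE p n (fun ω => Real.exp (ε / 8 * ((1 - ε / 2) * v - fK K univ ω))) ≤
      Real.exp (-(ε^2 * v / 32)) := by
  have h := fK_mgf p hp hs n hK (-(ε / 8)) (by rw [abs_neg, abs_of_pos] <;> linarith)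
  have e : ∀ ω : Fin n → α, Real.exp (ε / 8 * ((1 - ε / 2) * v - fK K univ ω)) =
      Real.exp (ε / 8 * ((1 - ε / 2) * v)) * Real.exp (-(ε / 8) * fK K univ ω) := by
    intro ω; rw [← Real.exp_add]; congr 1; ring
  simp_rw [e]
  rw [cE_mul_left]
  refine le_trans (mul_le_mul_of_nonneg_left h (Real.exp_pos _).le) ?_
  rw [← Real.exp_add, hv]
  apply Real.exp_le_exp.2
  have : -(ε / 8) * v / (1 - 2 * -(ε / 8)) ≤ -(ε / 8 * v * (1 - ε / 4)) := by
    rw [div_le_iff₀ (by linarith)]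
    have : 0 ≤ ε / 8 * v := by positivity
    have h2 : (1 - ε / 4) * (1 - 2 * -(ε / 8)) ≤ 1 := by nlinarith
    nlinarith [mul_le_mul_of_nonneg_left h2 this]
  nlinarith [mul_nonneg (sq_nonneg ε) hv0]

/-- Excess over the truncation level. -/
noncomputable def bB (K : ℝ) {n : ℕ} (ω : Fin n → α) : ℝ :=
  ∑ x, (cnt univ x ω : ℝ) * ((cnt univ x ω : ℝ) - 1) * Real.exp ((cnt univ x ω : ℝ) - 1 - K)

/-- Number of colliding pairs. -/
noncomputable def nN {n : ℕ} (ω : Fin n → α) : ℝ :=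
  ∑ x, (cnt univ x ω : ℝ) * ((cnt univ x ω : ℝ) - 1)

lemma s_nonneg (s : ℕ) : 0 ≤ (s : ℝ) * ((s : ℝ) - 1) := by
  rcases Nat.eq_zero_or_pos s with h | h
  · simp [h]
  · have : (1 : ℝ) ≤ s := by exact_mod_cast h
    exact mul_nonneg (by linarith) (by linarith)

lemma gK_nonneg {K : ℝ} (hK : 0 < K) (s : ℕ) : 0 ≤ gK K s :=
  sum_nonneg fun j _ => le_min (by positivity) zero_le_one

lemma nN_ge {K : ℝ} (hK : 0 < K) {n : ℕ} (ω : Fin n → α) : 2 * K * fK K univ ω ≤ nN ω := by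
  rw [fK, mul_sum]
  exact sum_le_sum fun x _ => gK_le hK _

lemma nN_le {K : ℝ} (hK : 0 < K) {n : ℕ} (ω : Fin n → α) :
    nN ω ≤ 2 * K * fK K univ ω + bB K ω := by
  rw [fK, mul_sum, bB, ← sum_add_distrib]
  refine sum_le_sum fun x _ => ?_
  have hn := s_nonneg (cnt univ x ω)
  by_cases h : (cnt univ x ω : ℝ) - 1 ≤ K
  · rw [gK_eq hK _ h]
    linarith [mul_nonneg hn (Real.exp_pos ((cnt univ x ω : ℝ) - 1 - K)).le]
  · have h1 : 1 ≤ Real.exp ((cnt univ x ω : ℝ) - 1 - K) := Real.one_le_exp (by linarith)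
    have h2 := mul_nonneg (mul_pos two_pos hK).le (gK_nonneg hK (cnt univ x ω))
    nlinarith

lemma bB_nonneg {K : ℝ} {n : ℕ} (ω : Fin n → α) : 0 ≤ bB K ω :=
  sum_nonneg fun _ _ => mul_nonneg (s_nonneg _) (Real.exp_pos _).le

lemma nN_eq {K : ℝ} (hK : 0 < K) {n : ℕ} (ω : Fin n → α) (h : bB K ω < K^2) :
    nN ω = 2 * K * fK K univ ω := by
  rw [fK, mul_sum, nN]
  refine sum_congr rfl fun x _ => ?_
  by_cases hx : (cnt univ x ω : ℝ) - 1 ≤ K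
  · exact (gK_eq hK _ hx).symm
  · exfalso
    have h1 : 1 ≤ Real.exp ((cnt univ x ω : ℝ) - 1 - K) := Real.one_le_exp (by linarith)
    have h2 := single_le_sum (f := fun x => (cnt univ x ω : ℝ) * ((cnt univ x ω : ℝ) - 1) *
      Real.exp ((cnt univ x ω : ℝ) - 1 - K)) (s := univ)
      (fun x _ => mul_nonneg (s_nonneg _) (Real.exp_pos _).le) (mem_univ x)
    change _ ≤ bB K ω at h2
    have hn := s_nonneg (cnt univ x ω)
    have h3 : K^2 ≤ (cnt univ x ω : ℝ) * ((cnt univ x ω : ℝ) - 1) := by nlinarith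
    nlinarith

lemma cE_nN (hs : ∑ x, p x = 1) (n : ℕ) :
    cE p n nN = (n : ℝ) * ((n : ℝ) - 1) * ∑ x, (p x)^2 := by
  have h : ∀ x, _ := fun x => moment p hs n x 1
  simp only [one_pow, mul_one, sub_self, mul_zero, add_zero] at h
  unfold nN
  rw [cE_sum, mul_sum]
  exact sum_congr rfl fun x _ => h x

lemma cE_bB (hp : ∀ x, 0 ≤ p x) (hs : ∑ x, p x = 1) (n : ℕ) (hn : 2 ≤ n) (m : ℝ)
    (hm : ∀ x, n * p x ≤ m) (K : ℝ) :
    cE p n (bB K) ≤ (n : ℝ) * ((n : ℝ) - 1) * (∑ x, (p x)^2) * Real.exp (1 + 2 * m - K) := by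
  unfold bB
  rw [cE_sum, mul_sum, sum_mul]
  refine sum_le_sum fun x _ => ?_
  have e : ∀ ω : Fin n → α, (cnt univ x ω : ℝ) * ((cnt univ x ω : ℝ) - 1) *
      Real.exp ((cnt univ x ω : ℝ) - 1 - K) = Real.exp (-1 - K) *
      ((cnt univ x ω : ℝ) * ((cnt univ x ω : ℝ) - 1) * Real.exp 1 ^ (cnt univ x ω)) := by
    intro ω
    have : Real.exp ((cnt univ x ω : ℝ) - 1 - K) =
      Real.exp (-1 - K) * Real.exp 1 ^ (cnt univ x ω) := by
      rw [← Real.exp_nat_mul, ← Real.exp_add]; congr 1; ring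
    rw [this]; ring
  simp_rw [e]
  rw [cE_mul_left, moment p hs]
  have he : Real.exp 1 < 3 := Real.exp_one_lt_three
  have he1 : 1 ≤ Real.exp 1 := Real.one_le_exp zero_le_one
  have hb : (1 + p x * (Real.exp 1 - 1))^(n-2) ≤ Real.exp (2 * m) := by
    have h1 : 1 + p x * (Real.exp 1 - 1) ≤ Real.exp (2 * p x) := by
      have := Real.add_one_le_exp (2 * p x)
      nlinarith [hp x]
    have h0 : 0 ≤ 1 + p x * (Real.exp 1 - 1) := by
      nlinarith [mul_nonneg (hp x) (sub_nonneg.2 he1)]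
    refine le_trans (pow_le_pow_left₀ h0 h1 _) ?_
    rw [← Real.exp_nat_mul]
    apply Real.exp_le_exp.2
    rw [Nat.cast_sub hn]
    push_cast
    nlinarith [hm x, hp x]
  have hn1 : (2 : ℝ) ≤ n := by exact_mod_cast hn
  have e3 : Real.exp (1 + 2 * m - K) = Real.exp (-1 - K) * (Real.exp 1 ^ 2 * Real.exp (2 * m)) := by
    rw [← Real.exp_nat_mul, ← Real.exp_add, ← Real.exp_add]; congr 1; push_cast; ring
  rw [e3]
  have hc : 0 ≤ Real.exp (-1 - K) * ((n : ℝ) * ((n : ℝ) - 1) * (p x * Real.exp 1)^2) := by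
    have : (0 : ℝ) ≤ n - 1 := by linarith
    positivity
  have := mul_le_mul_of_nonneg_left hb hc
  nlinarith

set_option maxHeartbeats 1000000 in
open Classical in
lemma real_main (hp : ∀ x, 0 ≤ p x) (hs : ∑ x, p x = 1) (n : ℕ) (hn : 2 ≤ n) (ε : ℝ)
    (h0 : 0 < ε) (h1 : ε < 1) (hbig : 4 ≤ ε^2 * (n * Real.sqrt (∑ x, (p x)^2))) :
    cE p n (fun ω => if ε * (∑ x, (p x)^2) < |collEst n ω - ∑ x, (p x)^2| then 1 else 0) ≤
      3 * Real.exp (-(1/1000) * n * ε^2 * Real.sqrt (∑ x, (p x)^2)) := by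
  set Q := ∑ x, (p x)^2 with hQ
  have hQ0 : 0 ≤ Q := sum_nonneg fun x _ => sq_nonneg _
  set m := n * Real.sqrt Q with hm
  have hn1 : (2 : ℝ) ≤ n := by exact_mod_cast hn
  have hm2 : m^2 = n^2 * Q := by rw [hm, mul_pow, Real.sq_sqrt hQ0]
  have hm0 : 0 ≤ m := by positivity
  have hε2 : ε^2 < ε := by nlinarith
  have hm4 : 4 ≤ m := by nlinarith
  have hmε : 4 ≤ ε * m := by nlinarith
  have hpm : ∀ x, n * p x ≤ m := by
    intro x
    apply mul_le_mul_of_nonneg_left _ (by linarith)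
    apply Real.le_sqrt_of_sq_le
    exact single_le_sum (f := fun x => (p x)^2) (fun x _ => sq_nonneg _) (mem_univ x)
  set K := 4 * m with hKd
  have hK : 0 < K := by linarith
  set E := (n : ℝ) * ((n : ℝ) - 1) * Q with hE
  have hnn : 0 < (n : ℝ) * ((n : ℝ) - 1) := mul_pos (by linarith) (by linarith)
  have hE0 : 0 ≤ E := mul_nonneg hnn.le hQ0
  have hEm : E ≤ m^2 := by rw [hm2, hE]; nlinarith
  have hEm2 : m^2 ≤ 2 * E := by
    rw [hm2, hE]
    nlinarith [mul_nonneg (mul_nonneg hQ0 (by linarith : (0:ℝ) ≤ n)) (by linarith : (0:ℝ) ≤ n - 2)]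
  have hB := cE_bB p hp hs n hn m hpm K
  rw [← hQ, ← hE] at hB
  have hex : Real.exp (1 + 2 * m - K) ≤ Real.exp (-m) := Real.exp_le_exp.2 (by rw [hKd]; linarith)
  have hexm : Real.exp (-m) ≤ ε / 4 := by
    have h := Real.add_one_le_exp m
    rw [Real.exp_neg, inv_le_comm₀ (Real.exp_pos _) (by positivity), inv_div, div_le_iff₀ h0]
    nlinarith
  have hB' : cE p n (bB K) ≤ E * Real.exp (-m) := hB.trans (mul_le_mul_of_nonneg_left hex hE0)
  obtain ⟨v, hv⟩ : ∃ v, cE p n (fK K univ) = v := ⟨_, rfl⟩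
  have hEN : cE p n nN = E := cE_nN p hs n
  have hv1 : 2 * K * v ≤ E := by
    rw [← hEN, ← hv, ← cE_mul_left]
    exact cE_mono p hp n fun ω => nN_ge hK ω
  have hv2 : E * (1 - ε / 4) ≤ 2 * K * v := by
    have h := cE_mono p hp n fun ω => nN_le hK ω
    have h' : cE p n nN ≤ _ := h
    rw [cE_add, cE_mul_left, hv, hEN] at h'
    have := mul_le_mul_of_nonneg_left hexm hE0
    have h3 : cE p n (fun ω => bB K ω) = cE p n (bB K) := rfl
    linarith
  have hvm : 3 / 64 * m ≤ v := by
    have : 3 / 8 * m^2 ≤ 8 * m * v := by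
      have e : 2 * K * v = 8 * m * v := by rw [hKd]; ring
      nlinarith
    by_contra hc
    push Not at hc
    nlinarith
  have hv0 : 0 ≤ v := by linarith
  have hpt : ∀ ω : Fin n → α, (if ε * Q < |collEst n ω - Q| then (1 : ℝ) else 0) ≤
      (Real.exp (ε / 8 * (fK K univ ω - (1 + ε) * v)) +
        Real.exp (ε / 8 * ((1 - ε / 2) * v - fK K univ ω))) + (K^2)⁻¹ * bB K ω := by
    intro ω
    have p1 := Real.exp_pos (ε / 8 * (fK K univ ω - (1 + ε) * v))
    have p2 := Real.exp_pos (ε / 8 * ((1 - ε / 2) * v - fK K univ ω))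
    have p3 : 0 ≤ (K^2)⁻¹ * bB K ω := mul_nonneg (by positivity) (bB_nonneg ω)
    split_ifs with h
    · by_cases hb : bB K ω < K^2
      · have hN := nN_eq hK ω hb
        have hc : collEst n ω * ((n : ℝ) * ((n : ℝ) - 1)) = nN ω := by
          rw [collEst, coll_eq]
          exact div_mul_cancel₀ _ hnn.ne'
        rcases lt_abs.1 h with h | h
        · have h2 := mul_lt_mul_of_pos_right h hnn
          have h3 : (1 + ε) * E < nN ω := by rw [hE]; linarith
          have h4 : (1 + ε) * v ≤ fK K univ ω := by
            by_contra hcon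
            push Not at hcon
            have h5 := mul_lt_mul_of_pos_left hcon (by linarith : 0 < 2 * K)
            have h6 := mul_le_mul_of_nonneg_left hv1 (by linarith : 0 ≤ 1 + ε)
            linarith
          have := Real.one_le_exp (mul_nonneg (by linarith : 0 ≤ ε / 8) (sub_nonneg.2 h4))
          linarith
        · have h2 := mul_lt_mul_of_pos_right h hnn
          have h3 : nN ω < (1 - ε) * E := by rw [hE]; linarith
          have h4 : fK K univ ω ≤ (1 - ε / 2) * v := by
            by_contra hcon
            push Not at hcon
            have h5 := mul_lt_mul_of_pos_left hcon (by linarith : 0 < 2 * K)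
            have h6 := mul_le_mul_of_nonneg_left hv2 (by linarith : 0 ≤ 1 - ε / 2)
            have h7 : (1 - ε) * E ≤ (1 - ε / 2) * (E * (1 - ε / 4)) := by
              have a1 := mul_nonneg hE0 h0.le
              have a2 := mul_nonneg hE0 (sq_nonneg ε)
              have a3 : (1 - ε / 2) * (E * (1 - ε / 4)) = (1 - ε) * E + E * ε / 4 + E * ε^2 / 8 := by
                ring
              linarith
            linarith
          have := Real.one_le_exp (mul_nonneg (by linarith : 0 ≤ ε / 8) (sub_nonneg.2 h4))
          linarith
      · push Not at hb
        have : 1 ≤ (K^2)⁻¹ * bB K ω := by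
          rw [inv_mul_eq_div, one_le_div (by positivity)]
          exact hb
        linarith
    · linarith
  refine le_trans (cE_mono p hp n hpt) ?_
  rw [cE_add, cE_add, cE_mul_left]
  have u1 := chern_up p hp hs n hK h0 h1 hv hv0
  have u2 := chern_low p hp hs n hK h0 h1 hv hv0
  have u3 : (K^2)⁻¹ * cE p n (fun ω => bB K ω) ≤ Real.exp (-m) := by
    rw [inv_mul_le_iff₀ (by positivity)]
    refine hB'.trans ?_
    apply mul_le_mul_of_nonneg_right _ (Real.exp_pos _).le
    rw [hKd]
    nlinarith
  have t : -(1/1000) * n * ε^2 * Real.sqrt Q = -(1/1000) * (ε^2 * m) := by rw [hm]; ring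
  rw [t]
  have w1 : Real.exp (-(ε^2 * v / 32)) ≤ Real.exp (-(1/1000) * (ε^2 * m)) := by
    apply Real.exp_le_exp.2
    have := mul_le_mul_of_nonneg_left hvm (sq_nonneg ε)
    nlinarith
  have w2 : Real.exp (-m) ≤ Real.exp (-(1/1000) * (ε^2 * m)) := by
    apply Real.exp_le_exp.2
    nlinarith
  linarith

end

/-- Relative-error collision (Rényi-2 entropy) estimation. -/
theorem collision_estimation_relative :
    ∃ C c : ℝ, 0 < C ∧ 0 < c ∧
      ∀ (α : Type) [Fintype α] [DecidableEq α] [MeasurableSpace α] [MeasurableSingletonClass α]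
        (p : α → ℝ), (∀ x, 0 ≤ p x) → (∑ x, p x = 1) →
      ∀ (μ : Measure α) [IsProbabilityMeasure μ], (∀ x, μ {x} = ENNReal.ofReal (p x)) →
      ∀ (n : ℕ), 2 ≤ n → ∀ ε : ℝ, 0 < ε → ε < 1 →
        (Measure.pi fun _ : Fin n => μ)
            {ω : Fin n → α | ε * (∑ x, (p x) ^ 2) < |collEst n ω - ∑ x, (p x) ^ 2|}
          ≤ ENNReal.ofReal (C * Real.exp
              (-c * (n : ℝ) * ε ^ 2 * Real.sqrt (∑ x, (p x) ^ 2))) := by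
  classical
  refine ⟨3, 1/1000, by norm_num, by norm_num, ?_⟩
  intro α _ _ _ _ p hp hs μ _ hμ n hn ε h0 h1
  by_cases hbig : 4 ≤ ε^2 * (n * Real.sqrt (∑ x, (p x)^2))
  · refine le_trans ?_ (ENNReal.ofReal_le_ofReal (real_main p hp hs n hn ε h0 h1 hbig))
    set A := {ω : Fin n → α | ε * (∑ x, (p x) ^ 2) < |collEst n ω - ∑ x, (p x) ^ 2|} with hA
    have hAe : A = ⋃ ω ∈ A.toFinset, {ω} := by ext; simp
    rw [hAe]
    refine le_trans (measure_biUnion_finset_le _ _) ?_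
    simp_rw [Measure.pi_singleton, hμ]
    have e : ∀ ω : Fin n → α, ∏ i, ENNReal.ofReal (p (ω i)) = ENNReal.ofReal (∏ i, p (ω i)) :=
      fun ω => (ENNReal.ofReal_prod_of_nonneg fun i _ => hp _).symm
    simp_rw [e]
    rw [← ENNReal.ofReal_sum_of_nonneg fun ω _ => prod_nonneg fun i _ => hp _]
    apply ENNReal.ofReal_le_ofReal
    apply le_of_eq
    rw [cE]
    simp only [mul_ite, mul_one, mul_zero]
    rw [← sum_filter]
    apply sum_congr _ fun _ _ => rfl
    ext ω
    simp [hA]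
  · push Not at hbig
    refine le_trans prob_le_one ?_
    rw [← ENNReal.ofReal_one]
    apply ENNReal.ofReal_le_ofReal
    have := Real.add_one_le_exp (-(1/1000) * n * ε^2 * Real.sqrt (∑ x, (p x)^2))
    nlinarith
end

section
/- There exists a universal constant C > 0 such that for every finite type α, every probability mass function p, every n ≥ 2, every x ∈ α with p(x) > 0, and every even integer d ≥ 2: E[ |(S_x² − S_x) − E[S_x² − S_x]|^d ] ≤ (C·d)^d · (n·p(x))² · (max(d, n·p(x)))^(d−2) + (C·d)^(d/2) · (n·p(x))^(d+1) · (max(d, n·p(x)))^(d/2 − 1). -/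
open MeasureTheory ProbabilityTheory Finset

/-- The bin count `S_x`: number of sample points equal to `x`. -/
def binCount {α : Type} [DecidableEq α] (n : ℕ) (x : α) (ω : Fin n → α) : ℕ :=
  (Finset.univ.filter fun i => ω i = x).card


/-- Binomial weights. -/
noncomputable def bw (n : ℕ) (q : ℝ) (k : ℕ) : ℝ := (n.choose k : ℝ) * q ^ k * (1 - q) ^ (n - k)

lemma bw_nonneg {n : ℕ} {q : ℝ} (h0 : 0 ≤ q) (h1 : q ≤ 1) (k : ℕ) : 0 ≤ bw n q k := by
  have : 0 ≤ 1 - q := by linarith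
  unfold bw; positivity

lemma bw_mgf (n : ℕ) (q t : ℝ) : ∑ k ∈ range (n+1), bw n q k * t ^ k = (1 - q + q * t) ^ n := by
  rw [add_comm (1 - q), add_pow]
  refine Finset.sum_congr rfl fun k _ => ?_
  unfold bw; rw [mul_pow]; ring

lemma bw_one (n : ℕ) (q : ℝ) : ∑ k ∈ range (n+1), bw n q k = 1 := by
  have := bw_mgf n q 1
  simpa using this

lemma bw_mean (n : ℕ) (q : ℝ) : ∑ k ∈ range (n+1), bw n q k * k = n * q := by
  have := congrArg (Polynomial.eval q) (bernsteinPolynomial.sum_smul ℝ n)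
  simp [Polynomial.eval_finsetSum, bernsteinPolynomial] at this
  rw [← this]
  refine Finset.sum_congr rfl fun k _ => ?_
  unfold bw; ring

lemma bw_fact (n : ℕ) (q : ℝ) (hn : 1 ≤ n) :
    ∑ k ∈ range (n+1), bw n q k * ((k:ℝ)^2 - k) = n * (n - 1) * q ^ 2 := by
  have := congrArg (Polynomial.eval q) (bernsteinPolynomial.sum_mul_smul ℝ n)
  simp [Polynomial.eval_finsetSum, bernsteinPolynomial] at this
  rw [Nat.cast_pred hn] at this
  rw [← this]
  refine Finset.sum_congr rfl fun k _ => ?_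
  rcases k with _ | k
  · simp
  · unfold bw; push_cast; ring

lemma law {α : Type} [Fintype α] [DecidableEq α] [MeasurableSpace α] [MeasurableSingletonClass α]
    (p : α → ℝ) (hp : ∀ x, 0 ≤ p x) (hs : ∑ x, p x = 1) (μ : Measure α) [IsProbabilityMeasure μ]
    (hμ : ∀ x, μ {x} = ENNReal.ofReal (p x)) (n : ℕ) (x : α) (f : ℕ → ℝ) :
    ∫ ω, f (binCount n x ω) ∂(Measure.pi fun _ : Fin n => μ)
      = ∑ k ∈ range (n+1), bw n (p x) k * f k := by
  rw [integral_fintype (Integrable.of_finite)]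
  have h1 : ∀ ω : Fin n → α, (Measure.pi fun _ : Fin n => μ).real {ω} = ∏ i, p (ω i) := by
    intro ω
    rw [Measure.real, Measure.pi_singleton, ENNReal.toReal_prod]
    refine Finset.prod_congr rfl fun i _ => ?_
    rw [hμ, ENNReal.toReal_ofReal (hp _)]
  let g : α → Polynomial ℝ := fun a => Polynomial.C (p a) * Polynomial.X ^ (if a = x then 1 else 0)
  have h2 : ∀ ω : Fin n → α, ∏ i, g (ω i)
      = Polynomial.C (∏ i, p (ω i)) * Polynomial.X ^ (binCount n x ω) := by
    intro ω
    simp only [g, Finset.prod_mul_distrib, Finset.prod_pow_eq_pow_sum, map_prod]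
    congr 2
    simp [binCount]
  have h3 : ∑ a, g a = Polynomial.C (p x) * Polynomial.X + Polynomial.C (1 - p x) := by
    rw [← Finset.add_sum_erase _ _ (Finset.mem_univ x)]
    have : ∑ a ∈ univ.erase x, g a = Polynomial.C (∑ a ∈ univ.erase x, p a) := by
      rw [map_sum]
      refine Finset.sum_congr rfl fun a ha => ?_
      simp [g, Finset.ne_of_mem_erase ha]
    rw [this, ← hs, ← Finset.add_sum_erase _ _ (Finset.mem_univ x)]
    simp [g]
  let L : Polynomial ℝ →ₗ[ℝ] ℝ := Polynomial.lsum fun k => (LinearMap.mulRight ℝ (f k))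
  have hL : ∀ c k, L (Polynomial.C c * Polynomial.X ^ k) = c * f k := by
    intro c k
    rw [Polynomial.C_mul_X_pow_eq_monomial]
    simp [L, Polynomial.lsum_apply, Polynomial.sum_monomial_index]
  have h4 := congrArg L (Fintype.sum_pow g n)
  rw [h3, add_pow, map_sum, map_sum] at h4
  simp only [h2, hL] at h4
  simp only [h1, smul_eq_mul]
  rw [← h4]
  refine Finset.sum_congr rfl fun k _ => ?_
  rw [← hL]
  congr 1
  unfold bw
  simp only [map_mul, map_pow, mul_pow, map_natCast]
  ring

lemma pow3 {a b c : ℝ} (ha : 0 ≤ a) (hb : 0 ≤ b) (hc : 0 ≤ c) (d : ℕ) :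
    (a + b + c) ^ d ≤ 3 ^ d * (a ^ d + b ^ d + c ^ d) := by
  have hA := pow_nonneg ha d
  have hB := pow_nonneg hb d
  have hC := pow_nonneg hc d
  have key : ∀ y, 0 ≤ y → a ≤ y → b ≤ y → c ≤ y → (a+b+c)^d ≤ 3^d * y^d := by
    intro y _ h1 h2 h3
    rw [← mul_pow]
    exact pow_le_pow_left₀ (by positivity) (by linarith) d
  have h3 : (0:ℝ) ≤ 3 ^ d := by positivity
  rcases le_total a b with h | h <;> rcases le_total b c with h' | h' <;>
    rcases le_total a c with h'' | h''
  all_goals first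
    | exact (key a ha le_rfl (by linarith) (by linarith)).trans (mul_le_mul_of_nonneg_left (by linarith) h3)
    | exact (key b hb (by linarith) le_rfl (by linarith)).trans (mul_le_mul_of_nonneg_left (by linarith) h3)
    | exact (key c hc (by linarith) (by linarith) le_rfl).trans (mul_le_mul_of_nonneg_left (by linarith) h3)

lemma exp_two (u : ℝ) (hu : 0 ≤ u) : Real.exp u - 1 - u ≤ u ^ 2 * Real.exp u := by
  have h1 : 1 - u ≤ Real.exp (-u) := by have := Real.add_one_le_exp (-u); linarith
  have h2 : (1 - u) * Real.exp u ≤ 1 := by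
    have := mul_le_mul_of_nonneg_right h1 (Real.exp_pos u).le
    rwa [← Real.exp_add, neg_add_cancel, Real.exp_zero] at this
  nlinarith

lemma exp_le3 (j : ℕ) : Real.exp j ≤ 3 ^ j := by
  rw [← Real.exp_one_pow]
  have := Real.exp_one_lt_d9
  exact pow_le_pow_left₀ (Real.exp_pos 1).le (by linarith) j

lemma three_pow (k : ℕ) : (3:ℝ) ^ (k+2) ≤ 3 * (3 ^ (k+2) - 1 - 2 * ((k+2 : ℕ):ℝ)) := by
  have : (15:ℝ) + 6 * k ≤ 2 * 3 ^ (k+2) := by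
    induction k with
    | zero => norm_num
    | succ k ih => rw [show k+1+2 = (k+2)+1 by ring, pow_succ]; push_cast; nlinarith [Nat.cast_nonneg (α := ℝ) k]
  push_cast; linarith

lemma ptA (d k : ℕ) (hd : 1 ≤ d) :
    ((k:ℝ)^2 - k) ^ d ≤ 3 * ((2*d).factorial : ℝ) * (3 ^ k - 1 - 2 * (k:ℝ)) := by
  rcases k with _ | _ | k
  · simp [show d ≠ 0 by omega]
  · norm_num [show d ≠ 0 by omega]
  · have hk : (1:ℝ) ≤ ((k+1+1:ℕ):ℝ) := by push_cast; linarith [Nat.cast_nonneg (α := ℝ) k]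
    set K : ℝ := ((k+1+1:ℕ):ℝ) with hK
    have h1 : (K^2 - K) ^ d ≤ K ^ (2*d) := by
      rw [pow_mul]
      exact pow_le_pow_left₀ (by nlinarith) (by linarith) d
    have h2 := Real.pow_div_factorial_le_exp K (by linarith) (2*d)
    have hf : (0:ℝ) < ((2*d).factorial : ℝ) := by positivity
    rw [div_le_iff₀ hf] at h2
    have h3 := exp_le3 (k+1+1)
    have h4 := three_pow k
    calc _ ≤ Real.exp K * ((2*d).factorial : ℝ) := h1.trans h2
      _ ≤ (3 * (3 ^ (k+1+1) - 1 - 2 * K)) * ((2*d).factorial : ℝ) :=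
        mul_le_mul_of_nonneg_right (h3.trans h4) hf.le
      _ = _ := by ring

lemma fact_bd (j : ℕ) : ((2*j).factorial : ℝ) ≤ 4 ^ j * (j:ℝ) ^ (2*j) := by
  calc ((2*j).factorial : ℝ) ≤ ((2*j:ℕ):ℝ) ^ (2*j) := by exact_mod_cast Nat.factorial_le_pow _
    _ = _ := by push_cast; rw [mul_pow, pow_mul 2]; norm_num

lemma base_le (n : ℕ) (q s : ℝ) (hs : 0 ≤ 1 + q * s) : (1 + q * s) ^ n ≤ Real.exp (n * q * s) := by
  calc (1 + q * s) ^ n ≤ (Real.exp (q*s)) ^ n :=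
        pow_le_pow_left₀ hs (by have := Real.add_one_le_exp (q*s); linarith) n
    _ = _ := by rw [← Real.exp_nat_mul]; ring_nf

lemma caseA (n d : ℕ) (q : ℝ) (hn : 1 ≤ n) (h0 : 0 < q) (h1 : q ≤ 1) (hd : 2 ≤ d)
    (hm : n * q ≤ d) :
    ∑ k ∈ range (n+1), bw n q k * |((k:ℝ)^2 - k) - n * (n-1) * q^2| ^ d
      ≤ (10000 * d) ^ d * (n * q) ^ 2 * (d:ℝ) ^ (d - 2) := by
  have hn' : (1:ℝ) ≤ n := by exact_mod_cast hn
  have hd' : (2:ℝ) ≤ d := by exact_mod_cast hd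
  set m : ℝ := n * q with hmdef
  have hm0 : 0 ≤ m := by positivity
  have hE0 : 0 ≤ (n:ℝ) * (n-1) * q^2 := by
    have : (0:ℝ) ≤ n - 1 := by linarith
    positivity
  have hE1 : (n:ℝ) * (n-1) * q^2 ≤ m^2 := by
    rw [hmdef]; nlinarith [sq_nonneg q]
  have hF : (0:ℝ) ≤ ((2*d).factorial : ℝ) := by positivity
  have pt : ∀ k : ℕ, |((k:ℝ)^2 - k) - n * (n-1) * q^2| ^ d ≤
      2 ^ d * (3 * ((2*d).factorial : ℝ) * (3 ^ k - 1 - 2 * (k:ℝ)) + m ^ (2*d)) := by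
    intro k
    have hk : (0:ℝ) ≤ (k:ℝ)^2 - k := by
      rcases k with _ | k
      · simp
      · push_cast; nlinarith [Nat.cast_nonneg (α := ℝ) k]
    have a1 : |((k:ℝ)^2 - k) - n * (n-1) * q^2| ≤ ((k:ℝ)^2 - k) + m^2 := by
      rw [abs_le]; constructor <;> linarith
    calc _ ≤ (((k:ℝ)^2 - k) + m^2) ^ d := pow_le_pow_left₀ (abs_nonneg _) a1 d
      _ ≤ 2 ^ (d-1) * (((k:ℝ)^2 - k)^d + (m^2)^d) := add_pow_le hk (by positivity) d
      _ ≤ 2 ^ d * (((k:ℝ)^2 - k)^d + (m^2)^d) := by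
        apply mul_le_mul_of_nonneg_right
        · exact pow_le_pow_right₀ (by norm_num) (by omega)
        · have := pow_nonneg hk d; positivity
      _ ≤ _ := by
        rw [← pow_mul]
        have := ptA d k (by omega)
        gcongr
  have s1 : ∑ k ∈ range (n+1), bw n q k * |((k:ℝ)^2 - k) - n * (n-1) * q^2| ^ d ≤
      2 ^ d * (3 * ((2*d).factorial : ℝ) * ((1 - q + q * 3)^n - 1 - 2 * m) + m ^ (2*d)) := by
    calc _ ≤ ∑ k ∈ range (n+1), bw n q k * (2 ^ d * (3 * ((2*d).factorial : ℝ) * (3 ^ k - 1 - 2 * (k:ℝ)) + m ^ (2*d))) :=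
          Finset.sum_le_sum fun k _ => mul_le_mul_of_nonneg_left (pt k) (bw_nonneg h0.le h1 k)
      _ = 2 ^ d * (3 * ((2*d).factorial : ℝ) * (∑ k ∈ range (n+1), bw n q k * 3 ^ k - ∑ k ∈ range (n+1), bw n q k - 2 * ∑ k ∈ range (n+1), bw n q k * k) + m ^ (2*d) * ∑ k ∈ range (n+1), bw n q k) := by
          simp only [Finset.mul_sum, ← Finset.sum_sub_distrib, ← Finset.sum_add_distrib]
          refine Finset.sum_congr rfl fun k _ => ?_
          ring
      _ = _ := by rw [bw_mgf, bw_one, bw_mean]; ring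
  have s2 : (1 - q + q * 3)^n - 1 - 2 * m ≤ 4 * m^2 * 9 ^ d := by
    have e1 := base_le n q 2 (by positivity)
    have e2 := exp_two (2*m) (by positivity)
    have e3 : Real.exp (2*m) ≤ 9 ^ d := by
      calc _ ≤ Real.exp ((2*d:ℕ):ℝ) := Real.exp_le_exp.2 (by push_cast; linarith)
        _ ≤ 3 ^ (2*d) := exp_le3 _
        _ = 9 ^ d := by rw [pow_mul]; norm_num
    rw [← hmdef, mul_comm m 2] at e1
    have e4 : (2*m)^2 * Real.exp (2*m) ≤ (2*m)^2 * 9^d := by gcongr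
    have e5 : 1 - q + q * 3 = 1 + q * 2 := by ring
    rw [e5]
    nlinarith
  have dd : (d:ℝ) ^ (2*d) = (d:ℝ)^2 * ((d:ℝ)^d * (d:ℝ)^(d-2)) := by
    rw [← pow_add, ← pow_add]; congr 1; omega
  set D : ℝ := (d:ℝ)^d * (d:ℝ)^(d-2) with hD
  have hD0 : 0 ≤ D := by positivity
  have s3 : m ^ (2*d) ≤ m^2 * D := by
    rw [hD, ← pow_add, show 2*d = 2 + (d + (d-2)) by omega, pow_add]
    gcongr
  have s4 : (d:ℝ)^2 ≤ 4 ^ d := by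
    have : (d:ℝ) ≤ 2 ^ d := by exact_mod_cast (Nat.lt_two_pow_self).le
    calc (d:ℝ)^2 ≤ (2^d)^2 := by gcongr
      _ = 4 ^ d := by rw [← pow_mul, mul_comm, pow_mul]; norm_num
  have s5 : ((2*d).factorial : ℝ) ≤ 4 ^ d * (4 ^ d * D) := by
    refine (fact_bd d).trans ?_
    rw [dd]; gcongr
  have s6 : (1:ℝ) ≤ 4^d * 4^d * 9^d := by
    have a : (1:ℝ) ≤ 4^d := one_le_pow₀ (by norm_num)
    have b : (1:ℝ) ≤ 9^d := one_le_pow₀ (by norm_num)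
    exact one_le_mul_of_one_le_of_one_le (one_le_mul_of_one_le_of_one_le a a) b
  have s7 : (13:ℝ) ≤ 13 ^ d := le_self_pow₀ (by norm_num) (by omega)
  calc _ ≤ _ := s1
    _ ≤ 2 ^ d * (3 * (4 ^ d * (4 ^ d * D)) * (4 * m^2 * 9 ^ d) + m^2 * D) := by
      have : 3 * ((2*d).factorial : ℝ) * ((1 - q + q * 3)^n - 1 - 2 * m) ≤ 3 * (4 ^ d * (4 ^ d * D)) * (4 * m^2 * 9 ^ d) := by
        calc _ ≤ 3 * ((2*d).factorial : ℝ) * (4 * m^2 * 9 ^ d) := by gcongr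
          _ ≤ _ := by gcongr
      gcongr
    _ ≤ 2 ^ d * (13 ^ d * (4^d * 4^d * 9^d) * (m^2 * D)) := by
      apply mul_le_mul_of_nonneg_left _ (by positivity)
      have hmD : 0 ≤ m^2 * D := by positivity
      have t1 : m^2 * D ≤ (4^d * 4^d * 9^d) * (m^2 * D) := le_mul_of_one_le_left hmD s6
      have t2 : 13 * ((4^d * 4^d * 9^d) * (m^2 * D)) ≤ 13 ^ d * ((4^d * 4^d * 9^d) * (m^2 * D)) := by gcongr
      nlinarith
    _ = 3744 ^ d * (m^2 * D) := by
      rw [show (3744:ℝ) = 2 * (13 * (4*4*9)) by norm_num]; simp only [mul_pow]; ring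
    _ ≤ 10000 ^ d * (m^2 * D) := by gcongr; norm_num
    _ = _ := by rw [hD, mul_pow]; ring

lemma mgfZ (n : ℕ) (q l : ℝ) (h0 : 0 < q) (h1 : q ≤ 1) (hl : |l| ≤ 1) :
    ∑ k ∈ range (n+1), bw n q k * Real.exp (l * ((k:ℝ) - n * q)) ≤ Real.exp (n * q * l^2) := by
  have e : ∑ k ∈ range (n+1), bw n q k * Real.exp (l * ((k:ℝ) - n * q))
      = Real.exp (-(l * (n*q))) * (1 + q * (Real.exp l - 1)) ^ n := by
    rw [show 1 + q * (Real.exp l - 1) = 1 - q + q * Real.exp l by ring, ← bw_mgf, Finset.mul_sum]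
    refine Finset.sum_congr rfl fun k _ => ?_
    rw [← Real.exp_nat_mul, mul_left_comm, ← Real.exp_add]
    ring_nf
  rw [e]
  have b := base_le n q (Real.exp l - 1) (by nlinarith [Real.exp_pos l])
  have c := (abs_le.1 (Real.abs_exp_sub_one_sub_id_le hl)).2
  calc _ ≤ Real.exp (-(l * (n*q))) * Real.exp (n * q * (Real.exp l - 1)) := by gcongr
    _ = Real.exp (n * q * (Real.exp l - 1 - l)) := by rw [← Real.exp_add]; ring_nf
    _ ≤ _ := by
      apply Real.exp_le_exp.2
      gcongr

lemma momZ (n j : ℕ) (q : ℝ) (h0 : 0 < q) (h1 : q ≤ 1) (hj : 1 ≤ j) (hm : (j:ℝ) ≤ n * q) :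
    ∑ k ∈ range (n+1), bw n q k * ((k:ℝ) - n * q) ^ (2*j) ≤ 2 * (12 * j * (n * q)) ^ j := by
  have hj' : (1:ℝ) ≤ j := by exact_mod_cast hj
  set m : ℝ := n * q with hmdef
  have hm0 : 0 < m := by linarith
  set l := Real.sqrt (j / m) with hl
  have hl2 : l ^ 2 = j / m := Real.sq_sqrt (by positivity)
  have hl0 : 0 < l := Real.sqrt_pos.2 (by positivity)
  have hl1 : l ≤ 1 := by
    rw [hl, Real.sqrt_le_one]
    exact (div_le_one hm0).2 hm
  have hml : m * l^2 = j := by rw [hl2]; field_simp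
  have a := mgfZ n q l h0 h1 (by rw [abs_of_pos hl0]; exact hl1)
  have b := mgfZ n q (-l) h0 h1 (by rw [abs_neg, abs_of_pos hl0]; exact hl1)
  rw [neg_sq] at b
  rw [← hmdef, hml] at a b
  have hF : (0:ℝ) < ((2*j).factorial : ℝ) := by positivity
  have pt : ∀ k : ℕ, (j/m)^j * ((k:ℝ) - m) ^ (2*j) ≤
      ((2*j).factorial : ℝ) * (Real.exp (l * ((k:ℝ) - m)) + Real.exp (-l * ((k:ℝ) - m))) := by
    intro k
    have h := Real.pow_div_factorial_le_exp |l * ((k:ℝ) - m)| (abs_nonneg _) (2*j)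
    rw [div_le_iff₀ hF, (even_two_mul j).pow_abs, mul_pow, pow_mul l, hl2] at h
    refine h.trans ?_
    rw [mul_comm]
    gcongr
    rcases abs_choice (l * ((k:ℝ) - m)) with h | h <;> rw [h]
    · linarith [Real.exp_pos (-l * ((k:ℝ) - m))]
    · rw [neg_mul]; linarith [Real.exp_pos (l * ((k:ℝ) - m))]
  have s : (j/m)^j * ∑ k ∈ range (n+1), bw n q k * ((k:ℝ) - m) ^ (2*j) ≤
      ((2*j).factorial : ℝ) * (2 * Real.exp j) := by
    calc _ = ∑ k ∈ range (n+1), bw n q k * ((j/m)^j * ((k:ℝ) - m) ^ (2*j)) := by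
          rw [Finset.mul_sum]; refine Finset.sum_congr rfl fun k _ => ?_
          ring
      _ ≤ ∑ k ∈ range (n+1), bw n q k * (((2*j).factorial : ℝ) * (Real.exp (l * ((k:ℝ) - m)) + Real.exp (-l * ((k:ℝ) - m)))) :=
          Finset.sum_le_sum fun k _ => mul_le_mul_of_nonneg_left (pt k) (bw_nonneg h0.le h1 k)
      _ = ((2*j).factorial : ℝ) * (∑ k ∈ range (n+1), bw n q k * Real.exp (l * ((k:ℝ) - m)) + ∑ k ∈ range (n+1), bw n q k * Real.exp (-l * ((k:ℝ) - m))) := by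
          rw [← Finset.sum_add_distrib, Finset.mul_sum]; refine Finset.sum_congr rfl fun k _ => ?_
          ring
      _ ≤ _ := by
          apply mul_le_mul_of_nonneg_left _ hF.le
          linarith
  have hjm : (0:ℝ) < (j/m)^j := by positivity
  refine le_of_mul_le_mul_left (s.trans ?_) hjm
  calc _ ≤ (4 ^ j * (j:ℝ) ^ (2*j)) * (2 * 3 ^ j) := by
        have := fact_bd j
        have := exp_le3 j
        gcongr
    _ = _ := by
        rw [pow_mul, ← mul_pow, mul_left_comm, ← mul_pow, mul_left_comm, ← mul_pow]
        congr 2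
        field_simp; norm_num

lemma caseB (n h : ℕ) (q : ℝ) (h0 : 0 < q) (h1 : q ≤ 1) (hh : 1 ≤ h)
    (hm : ((2*h:ℕ):ℝ) ≤ n * q) :
    ∑ k ∈ range (n+1), bw n q k * |((k:ℝ)^2 - k) - n * (n-1) * q^2| ^ (2*h)
      ≤ (10000 * (2*h:ℕ)) ^ h * (n * q) ^ (3*h) := by
  have hh' : (1:ℝ) ≤ h := by exact_mod_cast hh
  set d := 2*h with hd
  have hdr : (d:ℝ) = 2 * h := by rw [hd]; push_cast; ring
  have M1 := momZ n d q h0 h1 (by omega) hm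
  have M2 := momZ n h q h0 h1 hh (by linarith)
  set m : ℝ := n * q with hmdef
  have hm0 : 1 ≤ m := by linarith
  have pt : ∀ k : ℕ, |((k:ℝ)^2 - k) - n * (n-1) * q^2| ^ d ≤
      3 ^ d * (((k:ℝ) - m) ^ (2*d) + (2*m)^d * ((k:ℝ) - m)^(2*h) + m ^ d) := by
    intro k
    have id : ((k:ℝ)^2 - k) - n * (n-1) * q^2 = ((k:ℝ)-m)^2 + (2*m-1)*((k:ℝ)-m) - m * (1-q) := by
      rw [hmdef]; ring
    have a1 : |((k:ℝ)^2 - k) - n * (n-1) * q^2| ≤ ((k:ℝ)-m)^2 + (2*m)*|(k:ℝ)-m| + m := by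
      rw [id]
      refine (abs_sub _ _).trans (add_le_add ((abs_add_le _ _).trans (add_le_add ?_ ?_)) ?_)
      · rw [abs_of_nonneg (sq_nonneg _)]
      · rw [abs_mul, abs_of_nonneg (by linarith : 0 ≤ 2*m-1)]; gcongr; linarith
      · rw [abs_of_nonneg (by apply mul_nonneg <;> linarith)]; nlinarith
    calc _ ≤ _ := pow_le_pow_left₀ (abs_nonneg _) a1 d
      _ ≤ 3 ^ d * ((((k:ℝ)-m)^2)^d + ((2*m)*|(k:ℝ)-m|)^d + m^d) :=
        pow3 (by positivity) (by positivity) (by positivity) d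
      _ = _ := by rw [← pow_mul, mul_pow (2*m), hd, (even_two_mul h).pow_abs]
  have s1 : ∑ k ∈ range (n+1), bw n q k * |((k:ℝ)^2 - k) - n * (n-1) * q^2| ^ d ≤
      3 ^ d * (2 * (12 * d * m)^d + (2*m)^d * (2 * (12 * h * m)^h) + m ^ d) := by
    calc _ ≤ ∑ k ∈ range (n+1), bw n q k * (3 ^ d * (((k:ℝ) - m) ^ (2*d) + (2*m)^d * ((k:ℝ) - m)^(2*h) + m ^ d)) :=
          Finset.sum_le_sum fun k _ => mul_le_mul_of_nonneg_left (pt k) (bw_nonneg h0.le h1 k)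
      _ = 3 ^ d * ((∑ k ∈ range (n+1), bw n q k * ((k:ℝ) - m) ^ (2*d)) + (2*m)^d * (∑ k ∈ range (n+1), bw n q k * ((k:ℝ) - m)^(2*h)) + m ^ d * ∑ k ∈ range (n+1), bw n q k) := by
          simp only [Finset.mul_sum, ← Finset.sum_add_distrib]
          refine Finset.sum_congr rfl fun k _ => ?_
          ring
      _ ≤ _ := by rw [bw_one, mul_one]; gcongr
  set T : ℝ := (d:ℝ)^h * m^(3*h) with hT
  have hT0 : 0 ≤ T := by positivity
  have hd1 : (1:ℝ) ≤ d := by linarith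
  have m3 : m^(3*h) = m^h * m^(2*h) := by rw [← pow_add]; congr 1; ring
  have t1 : (12 * d * m)^d ≤ 144 ^ h * T := by
    calc (12 * d * m)^d = 144 ^ h * ((d:ℝ)^h * ((d:ℝ)^h * m^(2*h))) := by
          rw [hd, mul_pow, mul_pow, pow_mul 12, pow_mul (((2*h:ℕ):ℝ)), pow_two (((2*h:ℕ):ℝ)), mul_pow]; norm_num; ring
      _ ≤ _ := by rw [hT, m3]; gcongr
  have t2 : (2*m)^d * (12 * h * m)^h ≤ 144 ^ h * T := by
    calc (2*m)^d * (12 * h * m)^h = 48 ^ h * ((h:ℝ)^h * m^(3*h)) := by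
          rw [m3, hd, mul_pow 2 m, pow_mul 2, mul_pow _ m, mul_pow 12, show (48:ℝ) = 2^2 * 12 by norm_num, mul_pow (2^2)]; ring
      _ ≤ _ := by
          rw [hT]
          have : (h:ℝ) ≤ d := by linarith
          gcongr
          norm_num
  have t3 : m ^ d ≤ 144 ^ h * T := by
    have a : (1:ℝ) ≤ 144 ^ h * ((d:ℝ)^h * m^h) := one_le_mul_of_one_le_of_one_le (one_le_pow₀ (by norm_num))
      (one_le_mul_of_one_le_of_one_le (one_le_pow₀ hd1) (one_le_pow₀ hm0))
    calc m ^ d ≤ (144 ^ h * ((d:ℝ)^h * m^h)) * m^d := le_mul_of_one_le_left (by positivity) a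
      _ = _ := by rw [hT, m3, hd]; ring
  have s7 : (5:ℝ) ≤ 5 ^ h := le_self_pow₀ (by norm_num) (by omega)
  calc _ ≤ _ := s1
    _ ≤ 3 ^ d * (5 * (144 ^ h * T)) := by
      apply mul_le_mul_of_nonneg_left _ (by positivity)
      linarith
    _ ≤ 3 ^ d * (5 ^ h * (144 ^ h * T)) := by gcongr
    _ = 6480 ^ h * T := by
      rw [hd, pow_mul, show (6480:ℝ) = 3^2 * (5 * 144) by norm_num, mul_pow (3^2), mul_pow 5]; ring
    _ ≤ 10000 ^ h * T := by gcongr; norm_num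
    _ = _ := by rw [hT, mul_pow]; ring

/-- Moments of the centered bin contributions. -/
theorem bin_contribution_moments :
    ∃ C : ℝ, 0 < C ∧
      ∀ (α : Type) [Fintype α] [DecidableEq α] [MeasurableSpace α] [MeasurableSingletonClass α]
        (p : α → ℝ), (∀ x, 0 ≤ p x) → (∑ x, p x = 1) →
      ∀ (μ : Measure α) [IsProbabilityMeasure μ], (∀ x, μ {x} = ENNReal.ofReal (p x)) →
      ∀ (n : ℕ), 2 ≤ n → ∀ x : α, 0 < p x →
      ∀ (d : ℕ), 2 ≤ d → Even d →
        (∫ ω, |((binCount n x ω : ℝ) ^ 2 - (binCount n x ω : ℝ)) -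
            ∫ ω', ((binCount n x ω' : ℝ) ^ 2 - (binCount n x ω' : ℝ))
              ∂(Measure.pi fun _ : Fin n => μ)| ^ d
          ∂(Measure.pi fun _ : Fin n => μ))
        ≤ (C * d) ^ d * ((n : ℝ) * p x) ^ 2 * (max (d : ℝ) ((n : ℝ) * p x)) ^ (d - 2)
          + (C * d) ^ (d / 2) * ((n : ℝ) * p x) ^ (d + 1) *
            (max (d : ℝ) ((n : ℝ) * p x)) ^ (d / 2 - 1) := by
  refine ⟨10000, by norm_num, ?_⟩
  intro α _ _ _ _ p hp hs μ _ hμ n hn x hx d hd hev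
  have h1 : p x ≤ 1 := by
    rw [← hs]; exact Finset.single_le_sum (fun i _ => hp i) (Finset.mem_univ x)
  have L1 := law p hp hs μ hμ n x (fun k => (k:ℝ)^2 - k)
  rw [bw_fact n _ (by omega)] at L1
  rw [L1]
  have L2 := law p hp hs μ hμ n x (fun k => |((k:ℝ)^2 - k) - n * (n-1) * (p x)^2| ^ d)
  beta_reduce at L2
  rw [L2]
  have hm0 : (0:ℝ) ≤ n * p x := by positivity
  rcases le_total ((n:ℝ) * p x) d with hm | hm
  · rw [max_eq_left hm]
    refine (caseA n d (p x) (by omega) hx h1 hd hm).trans ?_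
    exact le_add_of_nonneg_right (by positivity)
  · rw [max_eq_right hm]
    obtain ⟨h, rfl⟩ := hev.two_dvd
    refine (caseB n h (p x) hx h1 (by omega) hm).trans ?_
    refine le_trans (le_of_eq ?_) (le_add_of_nonneg_left (by positivity))
    rw [Nat.mul_div_cancel_left _ (by norm_num), mul_assoc, ← pow_add]
    congr 2
    omega
end
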